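/- Let α, β ≥ 0 with (α, β) ≠ (0, 0). Then there exist constants c₁, c₂ > 0, depending only on α, β, such that for every n ∈ ℕ: c₁·n^{−2} ≤ E(M² ∩ B_∞^{α,β}, P_n)_{w_{α,β}, 1} ≤ c₂·n^{−2}·ln(n+1). -/

import Mathlib

open MeasureTheory Set Filter
open scoped ENNReal

noncomputable section

/-- The Jacobi weight `w_{α,β}(x) = (1+x)^α (1-x)^β`. -/
def jacobi (α β : ℝ) (x : ℝ) : ℝ := (1 + x) ^ α * (1 - x) ^ β

/-- `φ(x) = √(1-x²)`. -/
def phiW (x : ℝ) : ℝ := Real.sqrt (1 - x ^ 2)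

/-- The `L^p` norm of `g` on the interval `[a,b]` (essential sup when `p = ∞`). -/
def LpOn (g : ℝ → ℝ) (p : ℝ≥0∞) (a b : ℝ) : ℝ≥0∞ :=
  eLpNorm g p (volume.restrict (Icc a b))

/-- The `k`-th symmetric difference `Δ_h^k(f,x)` relative to `[-1,1]`. -/
def symmDelta (k : ℕ) (h : ℝ) (f : ℝ → ℝ) (x : ℝ) : ℝ :=
  if (x - k * h / 2 ∈ Icc (-1 : ℝ) 1 ∧ x + k * h / 2 ∈ Icc (-1 : ℝ) 1) then
    ∑ i ∈ Finset.range (k + 1), ((k.choose i : ℝ) * (-1 : ℝ) ^ (k - i) * f (x - k * h / 2 + i * h))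
  else 0

/-- Main-part weighted modulus `Ω_φ^k(f,δ)_{w,p}`. -/
def OmegaMain (k : ℕ) (f : ℝ → ℝ) (δ : ℝ) (wt : ℝ → ℝ) (p : ℝ≥0∞) : ℝ≥0∞ :=
  ⨆ h ∈ Ioc (0 : ℝ) δ,
    LpOn (fun x => wt x * symmDelta k (h * phiW x) f x) p
      (-1 + 2 * (k : ℝ) ^ 2 * h ^ 2) (1 - 2 * (k : ℝ) ^ 2 * h ^ 2)

/-- Forward part `Ω→_φ^k(f,δ)_{w,p}`. -/
def OmegaFwd (k : ℕ) (f : ℝ → ℝ) (δ : ℝ) (wt : ℝ → ℝ) (p : ℝ≥0∞) : ℝ≥0∞ :=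
  ⨆ h ∈ Ioc (0 : ℝ) (2 * (k : ℝ) ^ 2 * δ ^ 2),
    LpOn (fun x => wt x * symmDelta k h f (x + k * h / 2)) p
      (-1) (-1 + 2 * (k : ℝ) ^ 2 * δ ^ 2)

/-- Backward part `Ω←_φ^k(f,δ)_{w,p}`. -/
def OmegaBwd (k : ℕ) (f : ℝ → ℝ) (δ : ℝ) (wt : ℝ → ℝ) (p : ℝ≥0∞) : ℝ≥0∞ :=
  ⨆ h ∈ Ioc (0 : ℝ) (2 * (k : ℝ) ^ 2 * δ ^ 2),
    LpOn (fun x => wt x * symmDelta k h f (x - k * h / 2)) p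
      (1 - 2 * (k : ℝ) ^ 2 * δ ^ 2) 1

/-- Weighted Ditzian–Totik modulus `ω_φ^k(f,δ)_{w,p}`. -/
def omegaDT (k : ℕ) (f : ℝ → ℝ) (δ : ℝ) (wt : ℝ → ℝ) (p : ℝ≥0∞) : ℝ≥0∞ :=
  OmegaMain k f δ wt p + OmegaFwd k f δ wt p + OmegaBwd k f δ wt p

/-- `f` is `k`-monotone on `(-1,1)`: all `k`-th divided differences over `k+1` distinct
points of `(-1,1)` are nonnegative. -/
def kMonotoneOn (k : ℕ) (f : ℝ → ℝ) : Prop :=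
  ∀ x : Fin (k + 1) → ℝ, Function.Injective x → (∀ i, x i ∈ Ioo (-1 : ℝ) 1) →
    0 ≤ ∑ i, f (x i) / ∏ j ∈ Finset.univ.erase i, (x i - x j)

/-- `M^k`, the class of `k`-monotone functions on `(-1,1)`. -/
def MSet (k : ℕ) : Set (ℝ → ℝ) := {f | kMonotoneOn k f}

/-- `M_+^k`, the `k`-monotone functions on `(-1,1)` vanishing on `(-1,0]`. -/
def MPlus (k : ℕ) : Set (ℝ → ℝ) :=
  {f | kMonotoneOn k f ∧ ∀ x : ℝ, -1 < x → x ≤ 0 → f x = 0}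

/-- `J_p = (-1/p, ∞)` for finite `p`, `[0,∞)` for `p = ∞`. -/
def Jset (p : ℝ≥0∞) : Set ℝ := if p = ∞ then Ici 0 else Ioi (-1 / p.toReal)

/-- `W_p^{α,β}`. -/
def WSet (p : ℝ≥0∞) (α β : ℝ) : Set (ℝ → ℝ) :=
  {f | Measurable f ∧ LpOn (fun x => jacobi α β x * f x) p (-1) 1 ≠ ⊤}

/-- `B_p^{α,β}`, the unit sphere of `W_p^{α,β}`. -/
def BSet (p : ℝ≥0∞) (α β : ℝ) : Set (ℝ → ℝ) :=
  {f | Measurable f ∧ LpOn (fun x => jacobi α β x * f x) p (-1) 1 = 1}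

/-- Best weighted approximation `E_n(f)_{w,q}` by polynomials of degree at most `n`. -/
def En (n : ℕ) (f : ℝ → ℝ) (wt : ℝ → ℝ) (q : ℝ≥0∞) : ℝ≥0∞ :=
  ⨅ P ∈ {P : Polynomial ℝ | P.natDegree ≤ n},
    LpOn (fun x => wt x * (f x - P.eval x)) q (-1) 1

/-- `E(X, P_n)_{w,q}`. -/
def EClass (X : Set (ℝ → ℝ)) (n : ℕ) (wt : ℝ → ℝ) (q : ℝ≥0∞) : ℝ≥0∞ :=
  ⨆ f ∈ X, En n f wt q



open Polynomial in
theorem abs_sin_nat_mul_le' (N : ℕ) (u : ℝ) : |Real.sin (N * u)| ≤ N * |Real.sin u| := by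
  induction N with
  | zero => simp
  | succ k ih =>
    have : ((k + 1 : ℕ) : ℝ) * u = k * u + u := by push_cast; ring
    rw [this, Real.sin_add]
    calc _ ≤ |Real.sin (k*u) * Real.cos u| + |Real.cos (k*u) * Real.sin u| := abs_add_le _ _
      _ ≤ |Real.sin (k*u)| * 1 + 1 * |Real.sin u| := by
        rw [abs_mul, abs_mul]
        gcongr
        · exact Real.abs_cos_le_one _
        · exact Real.abs_cos_le_one _
      _ ≤ _ := by push_cast; linarith

theorem cheb_lip (N : ℕ) {y e : ℝ} (hy : y ∈ Icc (-1:ℝ) 1) (he : e ∈ Icc (-1:ℝ) 1) :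
    |(Polynomial.Chebyshev.T ℝ N).eval y - (Polynomial.Chebyshev.T ℝ N).eval e| * Real.sqrt (1 - e^2)
      ≤ 2 * N * |y - e| := by
  obtain ⟨a, ha0, ha1, rfl⟩ : ∃ a, 0 ≤ a ∧ a ≤ Real.pi ∧ y = Real.cos a :=
    ⟨Real.arccos y, Real.arccos_nonneg _, Real.arccos_le_pi _, (Real.cos_arccos hy.1 hy.2).symm⟩
  obtain ⟨s, hs0, hs1, rfl⟩ : ∃ a, 0 ≤ a ∧ a ≤ Real.pi ∧ e = Real.cos a :=
    ⟨Real.arccos e, Real.arccos_nonneg _, Real.arccos_le_pi _, (Real.cos_arccos he.1 he.2).symm⟩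
  have hsin : Real.sqrt (1 - Real.cos s ^ 2) = Real.sin s := by
    rw [← Real.sin_eq_sqrt_one_sub_cos_sq hs0 hs1]
  rw [Polynomial.Chebyshev.T_real_cos, Polynomial.Chebyshev.T_real_cos, hsin,
    Real.cos_sub_cos, Real.cos_sub_cos]
  have e1 : ((((N:ℕ):ℤ):ℝ) * a - ((N:ℤ):ℝ) * s)/2 = N * ((a - s)/2) := by push_cast; ring
  rw [e1]
  have h1 := abs_sin_nat_mul_le' N ((a-s)/2)
  have h2 := Real.abs_sin_le_one (((((N:ℕ):ℤ):ℝ) * a + ((N:ℤ):ℝ) * s)/2)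
  have hs := Real.sin_nonneg_of_nonneg_of_le_pi hs0 hs1
  have ha := Real.sin_nonneg_of_nonneg_of_le_pi ha0 ha1
  have h3 : Real.sin s ≤ 2 * Real.sin ((a+s)/2) := by
    have h4 : Real.sin a + Real.sin s ≤ 2 * Real.sin ((a+s)/2) := by
      have := Real.sin_add_sin a s
      rw [this]
      have h5 := Real.cos_le_one ((a-s)/2)
      have h6 : 0 ≤ Real.sin ((a+s)/2) := Real.sin_nonneg_of_nonneg_of_le_pi (by linarith) (by linarith)
      nlinarith
    linarith
  simp only [abs_mul, abs_neg, Nat.abs_ofNat]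
  have h6 : 0 ≤ Real.sin ((a+s)/2) := Real.sin_nonneg_of_nonneg_of_le_pi (by linarith) (by linarith)
  rw [abs_of_nonneg h6]
  set A := |Real.sin (((((N:ℕ):ℤ):ℝ) * a + ((N:ℤ):ℝ) * s)/2)|
  set S := |Real.sin ((a-s)/2)|
  have hS : 0 ≤ S := abs_nonneg _
  have hA : 0 ≤ A := abs_nonneg _
  have hN : (0:ℝ) ≤ N := Nat.cast_nonneg _
  calc 2 * A * |Real.sin (N * ((a-s)/2))| * Real.sin s ≤ 2 * 1 * (N * S) * (2 * Real.sin ((a+s)/2)) := by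
        gcongr
    _ = _ := by ring

theorem cheb_ext (N : ℕ) (hN : 1 ≤ N) {t : ℝ} (ht : t ∈ Icc (-1:ℝ) 1) (hφ : 8 / N ≤ Real.sqrt (1 - t^2)) :
    ∃ e ∈ Icc (-1:ℝ) 1, 1 ≤ |(Polynomial.Chebyshev.T ℝ N).eval e - (Polynomial.Chebyshev.T ℝ N).eval t| ∧
      |e - t| ≤ 5 * (Real.sqrt (1 - t^2) / N) ∧ Real.sqrt (1 - t^2) / 2 ≤ Real.sqrt (1 - e^2) := by
  obtain ⟨s, hs0, hs1, rfl⟩ : ∃ a, 0 ≤ a ∧ a ≤ Real.pi ∧ t = Real.cos a :=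
    ⟨Real.arccos t, Real.arccos_nonneg _, Real.arccos_le_pi _, (Real.cos_arccos ht.1 ht.2).symm⟩
  have hsin : Real.sqrt (1 - Real.cos s ^ 2) = Real.sin s := by
    rw [← Real.sin_eq_sqrt_one_sub_cos_sq hs0 hs1]
  rw [hsin] at hφ ⊢
  have hN' : (0:ℝ) < N := by exact_mod_cast hN
  have hpi := Real.pi_pos
  obtain ⟨k, hk, hk2⟩ : ∃ k : ℤ, |(k:ℝ) - N * s / Real.pi| ≤ 1 ∧
      1 ≤ |Real.cos (k * Real.pi) - (Polynomial.Chebyshev.T ℝ N).eval (Real.cos s)| := by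
    rcases le_total 0 ((Polynomial.Chebyshev.T ℝ N).eval (Real.cos s)) with h | h
    · refine ⟨2 * round ((N * s / Real.pi - 1)/2) + 1, ?_, ?_⟩
      · have := abs_sub_round ((N * s / Real.pi - 1)/2)
        rw [abs_le] at *
        push_cast
        constructor <;> linarith [this.1, this.2]
      · have : Real.cos (((2 * round ((N * s / Real.pi - 1)/2) + 1 : ℤ):ℝ) * Real.pi) = -1 := by
          have e : (((2 * round ((N * s / Real.pi - 1)/2) + 1 : ℤ):ℝ) * Real.pi)
            = Real.pi + (round ((N * s / Real.pi - 1)/2) : ℤ) * (2 * Real.pi) := by push_cast; ring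
          rw [e, Real.cos_add_int_mul_two_pi, Real.cos_pi]
        rw [this, abs_of_nonpos] <;> linarith
    · refine ⟨2 * round ((N * s / Real.pi)/2), ?_, ?_⟩
      · have := abs_sub_round ((N * s / Real.pi)/2)
        rw [abs_le] at *
        push_cast
        constructor <;> linarith [this.1, this.2]
      · have : Real.cos (((2 * round ((N * s / Real.pi)/2) : ℤ):ℝ) * Real.pi) = 1 := by
          have e : (((2 * round ((N * s / Real.pi)/2) : ℤ):ℝ) * Real.pi)
            = 0 + (round ((N * s / Real.pi)/2) : ℤ) * (2 * Real.pi) := by push_cast; ring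
          rw [e, Real.cos_add_int_mul_two_pi, Real.cos_zero]
        rw [this, abs_of_nonneg] <;> linarith
  set a := (k:ℝ) * Real.pi / N with ha
  have hd : |a - s| ≤ 4 / N := by
    have : a - s = ((k:ℝ) - N * s / Real.pi) * (Real.pi / N) := by rw [ha]; field_simp
    rw [this, abs_mul, abs_of_pos (div_pos hpi hN')]
    calc _ ≤ 1 * (Real.pi / N) := by gcongr
      _ ≤ 4 / N := by rw [one_mul]; gcongr; exact Real.pi_le_four
  have hs := Real.sin_nonneg_of_nonneg_of_le_pi hs0 hs1
  refine ⟨Real.cos a, Real.cos_mem_Icc a, ?_, ?_, ?_⟩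
  · rw [Polynomial.Chebyshev.T_real_cos]
    have : (((N:ℕ):ℤ):ℝ) * a = k * Real.pi := by rw [ha]; push_cast; field_simp
    rw [this]; exact hk2
  · rw [Real.cos_sub_cos, show (a+s)/2 = s + (a-s)/2 by ring, Real.sin_add]
    simp only [abs_mul, abs_neg, Nat.abs_ofNat]
    have h1 : |Real.sin ((a-s)/2)| ≤ 2/N := by
      refine (Real.abs_sin_le_abs).trans ?_
      rw [abs_div, Nat.abs_ofNat]; rw [div_le_iff₀ (by norm_num)]
      calc _ ≤ 4 / (N:ℝ) := hd
        _ = _ := by ring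
    have h2 : |Real.sin s * Real.cos ((a-s)/2) + Real.cos s * Real.sin ((a-s)/2)| ≤ Real.sin s * 1 + 1 * (2/N) := by
      refine (abs_add_le _ _).trans ?_
      rw [abs_mul, abs_mul, abs_of_nonneg hs]
      gcongr
      · exact Real.abs_cos_le_one _
      · exact Real.abs_cos_le_one _
    calc _ ≤ 2 * (Real.sin s * 1 + 1 * (2/N)) * (2/N) := by gcongr
      _ ≤ 2 * (Real.sin s * 1 + Real.sin s / 4) * (2/N) := by
        gcongr
        rw [show (8:ℝ)/N = 4 * (2/N) by ring] at hφ
        linarith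
      _ = _ := by ring
  · have : Real.sqrt (1 - Real.cos a ^ 2) = |Real.sin a| := by
      rw [← Real.sin_sq, Real.sqrt_sq_eq_abs]
    rw [this]
    have h1 : |Real.sin s - Real.sin a| ≤ |a - s| := by
      rw [Real.sin_sub_sin]
      simp only [abs_mul, Nat.abs_ofNat]
      have h1 : |Real.sin ((s-a)/2)| ≤ |a-s|/2 := by
        refine (Real.abs_sin_le_abs).trans ?_
        rw [abs_div, Nat.abs_ofNat, abs_sub_comm]
      calc _ ≤ 2 * (|a-s|/2) * 1 := by
            gcongr; exact Real.abs_cos_le_one _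
        _ = _ := by ring
    have h2 := le_abs_self (Real.sin a)
    have h3 := (abs_le.1 h1).2
    rw [show (8:ℝ)/N = 2 * (4/N) by ring] at hφ
    linarith


theorem poly_ii (D : Polynomial ℝ) (a b : ℝ) : IntervalIntegrable (fun y => D.eval y) volume a b :=
  (Polynomial.continuous D).intervalIntegrable _ _

theorem kernel1 (r N : ℕ) (hN : 1 ≤ N) {t ρ : ℝ} (ht : t ∈ Icc (-1:ℝ) 1)
    (hφ : 8 / N ≤ Real.sqrt (1 - t^2)) (hρ : ρ = Real.sqrt (1 - t^2) / N) :
    ∃ D : Polynomial ℝ, D.natDegree ≤ 2 * r * (N - 1) ∧ (∀ y ∈ Icc (-1:ℝ) 1, 0 ≤ D.eval y) ∧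
      ∫ y in (-1:ℝ)..1, D.eval y = 1 ∧
      ∀ y ∈ Icc (-1:ℝ) 1, D.eval y * ρ * (1 + |y - t| / ρ)^(2*r) ≤ 4 * 48^(2*r) := by
  set φ := Real.sqrt (1 - t^2) with hφd
  have hN' : (0:ℝ) < N := by exact_mod_cast hN
  have hφ0 : 0 < φ := lt_of_lt_of_le (by positivity) hφ
  have hρ0 : 0 < ρ := by rw [hρ]; positivity
  set T := Polynomial.Chebyshev.T ℝ N with hT
  obtain ⟨R, hR⟩ : ∃ R : Polynomial ℝ, T - Polynomial.C (T.eval t) = (Polynomial.X - Polynomial.C t) * R :=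
    Polynomial.X_sub_C_dvd_sub_C_eval
  have hRdeg : R.natDegree ≤ N - 1 := by
    by_cases hR0 : R = 0
    · simp [hR0]
    have h1 : (T - Polynomial.C (T.eval t)).natDegree ≤ N := by
      rw [Polynomial.natDegree_sub_C, hT, Polynomial.Chebyshev.natDegree_T]; simp
    rw [hR, Polynomial.natDegree_mul (Polynomial.X_sub_C_ne_zero t) hR0, Polynomial.natDegree_X_sub_C] at h1
    omega
  have hRe : ∀ y, T.eval y - T.eval t = (y - t) * R.eval y := by
    intro y
    have := congrArg (Polynomial.eval y) hR
    simpa using this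
  have hφt : 0 < 1 - t^2 := Real.sqrt_pos.1 hφ0
  have htlt : t ∈ Ioo (-1:ℝ) 1 := by constructor <;> nlinarith
  have hT1 : ∀ y ∈ Icc (-1:ℝ) 1, |T.eval y| ≤ 1 := fun y hy =>
    Polynomial.Chebyshev.abs_eval_T_real_le_one N (abs_le.2 hy)
  have hb1 : ∀ y ∈ Icc (-1:ℝ) 1, |R.eval y| * |y - t| ≤ 2 := by
    intro y hy
    rw [mul_comm, ← abs_mul, ← hRe]
    refine (abs_sub _ _).trans ?_
    linarith [hT1 y hy, hT1 t ht]
  have hb2' : ∀ y ∈ Icc (-1:ℝ) 1, y ≠ t → |R.eval y| * ρ ≤ 2 := by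
    intro y hy hyt
    have h := cheb_lip N hy ht
    rw [← hT, hRe, abs_mul, ← hφd] at h
    have hp : 0 < |y - t| := abs_pos.2 (sub_ne_zero.2 hyt)
    have : |R.eval y| * φ ≤ 2 * N := by
      by_contra hc
      push Not at hc
      have := mul_lt_mul_of_pos_left hc hp
      nlinarith
    rw [hρ, ← mul_div_assoc, div_le_iff₀ hN']; exact this
  have hb2 : ∀ y ∈ Icc (-1:ℝ) 1, |R.eval y| * ρ ≤ 2 := by
    intro y hy
    by_cases hyt : y = t
    · subst hyt
      have hc : Continuous fun x => |R.eval x| * ρ := by fun_prop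
      have h1 : Tendsto (fun x => |R.eval x| * ρ) (nhdsWithin y {y}ᶜ) (nhds (|R.eval y| * ρ)) :=
        (hc.tendsto y).mono_left nhdsWithin_le_nhds
      refine le_of_tendsto h1 ?_
      have h2 : ∀ᶠ x in nhdsWithin y {y}ᶜ, x ∈ Icc (-1:ℝ) 1 :=
        nhdsWithin_le_nhds (Icc_mem_nhds htlt.1 htlt.2)
      filter_upwards [h2, self_mem_nhdsWithin] with x hx hx'
      exact hb2' x hx hx'
    · exact hb2' y hy hyt
  have hb3 : ∀ y ∈ Icc (-1:ℝ) 1, |R.eval y| * ρ * (1 + |y - t|/ρ) ≤ 4 := by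
    intro y hy
    have : |R.eval y| * ρ * (1 + |y - t|/ρ) = |R.eval y| * ρ + |R.eval y| * |y - t| := by
      field_simp
    rw [this]; linarith [hb1 y hy, hb2 y hy]
  -- lower bound
  set I := ∫ y in (-1:ℝ)..1, (R^(2*r)).eval y with hI
  have hIlow : (ρ/4) * (1/(12*ρ))^(2*r) ≤ I := by
    obtain ⟨e, he, he1, he2, he3⟩ := cheb_ext N hN ht hφ
    rw [← hT] at he1
    rw [← hφd] at he2 he3
    rw [← hρ] at he2
    set η := ρ/8 with hη
    have hη0 : 0 < η := by positivity
    have hfe0 : 0 < Real.sqrt (1 - e^2) := by linarith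
    have hin : η ≤ 1 - |e| := by
      have h1 : (φ/2)^2 ≤ 1 - e^2 := by
        rw [← Real.le_sqrt' (by positivity)]; exact he3
      have h2 : |e| ≤ 1 := abs_le.2 he
      have h3 : e^2 = |e|^2 := (sq_abs e).symm
      have h4 : 1 - e^2 ≤ 2 * (1 - |e|) := by rw [h3]; nlinarith [abs_nonneg e]
      have h5 : 8 * ρ ≤ φ^2 := by
        rw [hρ, sq]
        calc 8 * (φ/N) = (8/N) * φ := by ring
          _ ≤ φ * φ := by gcongr
      rw [hη]; nlinarith
    have hsub : Icc (e-η) (e+η) ⊆ Icc (-1:ℝ) 1 := by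
      have := neg_abs_le e
      have := le_abs_self e
      apply Icc_subset_Icc <;> linarith
    have hlow : ∀ y ∈ Icc (e-η) (e+η), (1/(12*ρ))^(2*r) ≤ (R^(2*r)).eval y := by
      intro y hy
      have hye : |y - e| ≤ η := by rw [abs_le]; constructor <;> linarith [hy.1, hy.2]
      have h := cheb_lip N (hsub hy) he
      rw [← hT] at h
      have h1 : |T.eval y - T.eval e| ≤ 1/2 := by
        have h2 : |T.eval y - T.eval e| * (φ/2) ≤ 2 * N * η := by
          calc _ ≤ |T.eval y - T.eval e| * Real.sqrt (1 - e^2) := by gcongr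
            _ ≤ _ := h
            _ ≤ _ := by gcongr
        have h3 : 2 * N * η = 1/2 * (φ/2) := by rw [hη, hρ]; field_simp; norm_num
        rw [h3] at h2
        exact le_of_mul_le_mul_right h2 (by positivity)
      have h2 : 1/2 ≤ |T.eval y - T.eval t| := by
        have := abs_sub_le (T.eval e) (T.eval y) (T.eval t)
        rw [abs_sub_comm (T.eval e) (T.eval y)] at this
        linarith
      rw [hRe, abs_mul] at h2
      have h3 : |y - t| ≤ 6 * ρ := by
        have := abs_sub_le y e t
        rw [hη] at hye; linarith
      have h4 : 1/(12*ρ) ≤ |R.eval y| := by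
        rw [div_le_iff₀ (by positivity)]
        have : |y - t| * |R.eval y| ≤ 6 * ρ * |R.eval y| := by gcongr
        linarith
      rw [Polynomial.eval_pow, ← (even_two_mul r).pow_abs (R.eval y)]
      gcongr
    have hnn : ∀ y, 0 ≤ (R^(2*r)).eval y := by
      intro y; rw [Polynomial.eval_pow]; exact (even_two_mul r).pow_nonneg _
    calc (ρ/4) * (1/(12*ρ))^(2*r) = ∫ y in (e-η)..(e+η), (1/(12*ρ))^(2*r) := by
          rw [intervalIntegral.integral_const, smul_eq_mul]; congr 1; rw [hη]; ring
      _ ≤ ∫ y in (e-η)..(e+η), (R^(2*r)).eval y := by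
          apply intervalIntegral.integral_mono_on (by linarith) (by simp) (poly_ii _ _ _) hlow
      _ ≤ I := by
          apply intervalIntegral.integral_mono_interval
          · exact (hsub ⟨le_rfl, by linarith⟩).1
          · linarith
          · exact (hsub ⟨by linarith, le_rfl⟩).2
          · exact Eventually.of_forall hnn
          · exact poly_ii _ _ _
  have hI0 : 0 < I := lt_of_lt_of_le (by positivity) hIlow
  refine ⟨Polynomial.C (1/I) * R^(2*r), ?_, ?_, ?_, ?_⟩
  · refine (Polynomial.natDegree_C_mul_le _ _).trans (Polynomial.natDegree_pow_le.trans ?_)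
    gcongr
  · intro y hy
    rw [Polynomial.eval_mul, Polynomial.eval_C, Polynomial.eval_pow]
    exact mul_nonneg (by positivity) ((even_two_mul r).pow_nonneg _)
  · simp only [Polynomial.eval_mul, Polynomial.eval_C]
    rw [intervalIntegral.integral_const_mul, ← hI]; field_simp
  · intro y hy
    rw [Polynomial.eval_mul, Polynomial.eval_C, Polynomial.eval_pow, ← (even_two_mul r).pow_abs (R.eval y)]
    have h1 : (|R.eval y| * ρ * (1 + |y - t|/ρ))^(2*r) ≤ 4^(2*r) := by
      gcongr; exact hb3 y hy
    rw [mul_pow, mul_pow] at h1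
    have h2 : 1/I ≤ 4/ρ * (12*ρ)^(2*r) := by
      rw [div_le_iff₀ hI0]
      calc 1 = 4/ρ * (12*ρ)^(2*r) * ((ρ/4) * (1/(12*ρ))^(2*r)) := by
            rw [div_pow, one_pow]; field_simp
        _ ≤ _ := by gcongr
    calc 1/I * |R.eval y|^(2*r) * ρ * (1 + |y - t|/ρ)^(2*r)
        ≤ (4/ρ * (12*ρ)^(2*r)) * |R.eval y|^(2*r) * ρ * (1 + |y - t|/ρ)^(2*r) := by gcongr
      _ = 4 * 12^(2*r) * (|R.eval y|^(2*r) * ρ^(2*r) * (1 + |y - t|/ρ)^(2*r)) := by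
          rw [mul_pow]; field_simp
      _ ≤ 4 * 12^(2*r) * 4^(2*r) := by gcongr
      _ = _ := by rw [mul_assoc, ← mul_pow]; norm_num


theorem lor_integrable (c : ℝ) {ε : ℝ} (hε : 0 < ε) : Integrable fun y : ℝ => (1 + ((y - c)/ε)^2)⁻¹ := by
  have h1 := (integrable_inv_one_add_sq.comp_div hε.ne').comp_sub_right c
  exact h1

theorem lor_integral (c : ℝ) {ε : ℝ} (hε : 0 < ε) : ∫ y : ℝ, (1 + ((y - c)/ε)^2)⁻¹ = ε * Real.pi := by
  have h1 := integral_sub_right_eq_self (μ := volume) (fun y : ℝ => (1 + (y/ε)^2)⁻¹) c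
  rw [h1, Measure.integral_comp_div (fun y : ℝ => (1 + y^2)⁻¹), integral_univ_inv_one_add_sq, abs_of_pos hε, smul_eq_mul]

theorem lor_ii (c : ℝ) {ε : ℝ} (hε : 0 < ε) (a b : ℝ) :
    IntervalIntegrable (fun y : ℝ => (1 + ((y - c)/ε)^2)⁻¹) volume a b :=
  (lor_integrable c hε).intervalIntegrable

theorem lor_le (c : ℝ) {ε : ℝ} (hε : 0 < ε) {a b : ℝ} (hab : a ≤ b) :
    ∫ y in a..b, (1 + ((y - c)/ε)^2)⁻¹ ≤ ε * Real.pi := by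
  rw [intervalIntegral.integral_of_le hab, ← lor_integral c hε]
  exact setIntegral_le_integral (lor_integrable c hε) (Eventually.of_forall fun y => by positivity)

theorem mean_corr (k : ℕ) {B ρ t : ℝ} (hB : 0 < B) (hρ : 0 < ρ) (D : Polynomial ℝ)
    (hD0 : ∀ y ∈ Icc (-1:ℝ) 1, 0 ≤ D.eval y) (hD1 : ∫ y in (-1:ℝ)..1, D.eval y = 1)
    (hDB : ∀ y ∈ Icc (-1:ℝ) 1, D.eval y * ρ * (1 + |y - t| / ρ)^(k+4) ≤ B) :
    ∃ E : Polynomial ℝ, E.natDegree ≤ D.natDegree + 1 ∧ ∫ y in (-1:ℝ)..1, E.eval y = 1 ∧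
      ∫ y in (-1:ℝ)..1, (y - t) * E.eval y = 0 ∧
      ∀ y ∈ Icc (-1:ℝ) 1, |E.eval y| * ρ * (1 + |y - t| / ρ)^(k+3) ≤
        (Real.pi * B + Real.pi * B + 1) * (8 * Real.pi^2 * B^2) * B := by
  have hpi := Real.pi_pos
  set m1 := ∫ y in (-1:ℝ)..1, (y - t) * D.eval y with hm1
  set m2 := ∫ y in (-1:ℝ)..1, (y - t)^2 * D.eval y with hm2
  have hc0 : Continuous fun y => D.eval y := Polynomial.continuous D
  have i0 : IntervalIntegrable (fun y => D.eval y) volume (-1) 1 := poly_ii _ _ _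
  have i1 : IntervalIntegrable (fun y => (y-t) * D.eval y) volume (-1) 1 :=
    Continuous.intervalIntegrable (by fun_prop) _ _
  have i2 : IntervalIntegrable (fun y => (y-t)^2 * D.eval y) volume (-1) 1 :=
    Continuous.intervalIntegrable (by fun_prop) _ _
  have hone : ∀ y, 1 ≤ 1 + |y - t|/ρ := fun y => by
    have : 0 ≤ |y - t|/ρ := by positivity
    linarith
  have hm2le : m2 ≤ Real.pi * B * ρ^2 := by
    calc m2 ≤ ∫ y in (-1:ℝ)..1, (B * ρ) * (1 + ((y - t)/ρ)^2)⁻¹ := by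
          apply intervalIntegral.integral_mono_on (by norm_num) i2 ((lor_ii t hρ _ _).const_mul _)
          intro y hy
          have h := hDB y hy
          have h0 := hD0 y hy
          have h1 : (1 + |y - t|/ρ)^4 ≤ (1 + |y - t|/ρ)^(k+4) := pow_le_pow_right₀ (hone y) (by omega)
          set u := |y - t|/ρ with hu
          have hu0 : 0 ≤ u := by positivity
          have h2 : (y-t)^2 = ρ^2 * u^2 := by rw [hu, div_pow, sq_abs]; field_simp
          have h3 : ((y-t)/ρ)^2 = u^2 := by rw [hu, div_pow, div_pow, sq_abs]
          rw [h3, h2, ← div_eq_mul_inv, le_div_iff₀ (by positivity)]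
          have h4 : u^2 * (1+u^2) ≤ (1+u)^4 := by
            have : (1+u)^4 = u^2*(1+u^2) + (1 + 4*u+5*u^2+4*u^3) := by ring
            rw [this]; have : 0 ≤ 1 + 4*u+5*u^2+4*u^3 := by positivity
            linarith
          calc ρ^2 * u^2 * D.eval y * (1+u^2) = ρ * (D.eval y * ρ * (u^2 * (1+u^2))) := by ring
            _ ≤ ρ * (D.eval y * ρ * (1+u)^(k+4)) := by gcongr; exact h4.trans h1
            _ ≤ ρ * B := by gcongr
            _ = _ := by ring
      _ = B * ρ * ∫ y in (-1:ℝ)..1, (1 + ((y - t)/ρ)^2)⁻¹ := intervalIntegral.integral_const_mul _ _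
      _ ≤ B * ρ * (ρ * Real.pi) := by gcongr; exact lor_le t hρ (by norm_num)
      _ = _ := by ring
  set V := m2 - m1^2 with hV
  have hVeq : V = ∫ y in (-1:ℝ)..1, (y - (t + m1))^2 * D.eval y := by
    have : ∀ y, (y - (t + m1))^2 * D.eval y = ((y-t)^2 * D.eval y - (2 * m1) * ((y-t) * D.eval y)) + m1^2 * D.eval y := by
      intro y; ring
    simp_rw [this]
    rw [intervalIntegral.integral_add (i2.sub (i1.const_mul _)) (i0.const_mul _),
      intervalIntegral.integral_sub i2 (i1.const_mul _), intervalIntegral.integral_const_mul,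
      intervalIntegral.integral_const_mul, hD1, ← hm1, ← hm2, hV]
    ring
  set ε := ρ / (2 * Real.pi * B) with hε
  have hε0 : 0 < ε := by positivity
  have hVlow : ρ^2 / (8 * Real.pi^2 * B^2) ≤ V := by
    have h1 : ∫ y in (-1:ℝ)..1, ε^2 * (D.eval y - B/ρ * (1 + ((y - (t+m1))/ε)^2)⁻¹) ≤ V := by
      rw [hVeq]
      apply intervalIntegral.integral_mono_on (by norm_num)
      · exact ((i0.sub ((lor_ii _ hε0 _ _).const_mul _))).const_mul _
      · exact Continuous.intervalIntegrable (by fun_prop) _ _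
      intro y hy
      have h0 := hD0 y hy
      have hB' : D.eval y ≤ B/ρ := by
        rw [le_div_iff₀ hρ]
        refine le_trans ?_ (hDB y hy)
        have : 1 ≤ (1 + |y - t|/ρ)^(k+4) := one_le_pow₀ (hone y)
        exact le_mul_of_one_le_right (by positivity) this
      set u := (y - (t+m1))/ε with hu
      have h2 : (y - (t+m1))^2 = ε^2 * u^2 := by rw [hu]; field_simp
      rw [h2]
      have h3 : 1 - (1+u^2)⁻¹ ≤ u^2 := by
        have : 0 < 1 + u^2 := by positivity
        have h4 : (1 + u^2)⁻¹ = 1 - u^2/(1+u^2) := by field_simp; ring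
        rw [h4]
        have : u^2/(1+u^2) ≤ u^2 := div_le_self (by positivity) (by nlinarith)
        linarith
      rw [mul_assoc]
      gcongr
      have h5 : 0 ≤ (1+u^2)⁻¹ := by positivity
      nlinarith
    refine le_trans ?_ h1
    rw [intervalIntegral.integral_const_mul, intervalIntegral.integral_sub i0 ((lor_ii _ hε0 _ _).const_mul _),
      intervalIntegral.integral_const_mul, hD1]
    have h2 := lor_le (t+m1) hε0 (a := -1) (b := 1) (by norm_num)
    have h3 : B/ρ * ∫ y in (-1:ℝ)..1, (1 + ((y - (t+m1))/ε)^2)⁻¹ ≤ B/ρ * (ε * Real.pi) := by gcongr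
    have h4 : B/ρ * (ε * Real.pi) = 1/2 := by rw [hε]; field_simp
    calc ρ^2 / (8 * Real.pi^2 * B^2) = ε^2 * (1/2) := by rw [hε]; field_simp; norm_num
      _ ≤ _ := by gcongr; linarith
  have hV0 : 0 < V := lt_of_lt_of_le (by positivity) hVlow
  have hm1sq : m1^2 ≤ m2 := by linarith
  have hVinv : 1/V ≤ (8 * Real.pi^2 * B^2)/ρ^2 := by
    rw [div_le_div_iff₀ hV0 (by positivity)]
    rw [div_le_iff₀ (by positivity)] at hVlow
    linarith
  have hm2n : 0 ≤ m2 := le_trans (sq_nonneg _) hm1sq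
  have hp : m2/V ≤ (Real.pi * B) * (8 * Real.pi^2 * B^2) := by
    calc m2/V = m2 * (1/V) := by ring
      _ ≤ (Real.pi * B * ρ^2) * ((8 * Real.pi^2 * B^2)/ρ^2) := by gcongr
      _ = _ := by field_simp
  have hm1le : |m1| ≤ (Real.pi * B + 1) * ρ := by
    apply abs_le_of_sq_le_sq _ (by positivity)
    have : 0 < Real.pi * B := by positivity
    calc m1^2 ≤ Real.pi * B * ρ^2 := hm1sq.trans hm2le
      _ ≤ _ := by rw [mul_pow]; gcongr; nlinarith
  have hq : |m1/V| * ρ ≤ (Real.pi * B + 1) * (8 * Real.pi^2 * B^2) := by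
    rw [abs_div, abs_of_pos hV0]
    calc |m1|/V * ρ = |m1| * ρ * (1/V) := by ring
      _ ≤ ((Real.pi * B + 1) * ρ) * ρ * ((8 * Real.pi^2 * B^2)/ρ^2) := by gcongr
      _ = _ := by field_simp
  refine ⟨D * (Polynomial.C (m2/V) - Polynomial.C (m1/V) * (Polynomial.X - Polynomial.C t)), ?_, ?_, ?_, ?_⟩
  · refine Polynomial.natDegree_mul_le.trans ?_
    gcongr
    compute_degree
  · simp only [Polynomial.eval_mul, Polynomial.eval_sub, Polynomial.eval_C, Polynomial.eval_X]
    have : ∀ y, D.eval y * (m2/V - m1/V * (y - t)) = m2/V * D.eval y - m1/V * ((y-t) * D.eval y) := by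
      intro y; ring
    simp_rw [this]
    rw [intervalIntegral.integral_sub (i0.const_mul _) (i1.const_mul _), intervalIntegral.integral_const_mul,
      intervalIntegral.integral_const_mul, hD1, ← hm1]
    field_simp; rw [hV]
  · simp only [Polynomial.eval_mul, Polynomial.eval_sub, Polynomial.eval_C, Polynomial.eval_X]
    have : ∀ y, (y - t) * (D.eval y * (m2/V - m1/V * (y - t))) = m2/V * ((y-t) * D.eval y) - m1/V * ((y-t)^2 * D.eval y) := by
      intro y; ring
    simp_rw [this]
    rw [intervalIntegral.integral_sub (i1.const_mul _) (i2.const_mul _), intervalIntegral.integral_const_mul,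
      intervalIntegral.integral_const_mul, ← hm1, ← hm2]
    ring
  · intro y hy
    simp only [Polynomial.eval_mul, Polynomial.eval_sub, Polynomial.eval_C, Polynomial.eval_X]
    have h0 := hD0 y hy
    set u := |y - t|/ρ with hu
    have hu0 : 0 ≤ u := by positivity
    have hyu : |y - t| = ρ * u := by rw [hu]; field_simp
    have h1 : |m2/V - m1/V * (y - t)| ≤ (Real.pi * B + Real.pi * B + 1) * (8 * Real.pi^2 * B^2) * (1 + u) := by
      refine (abs_sub _ _).trans ?_
      rw [abs_mul, abs_of_nonneg (div_nonneg hm2n hV0.le), hyu, ← mul_assoc]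
      have a1 : |m1/V| * ρ * u ≤ (Real.pi * B + 1) * (8 * Real.pi^2 * B^2) * u := by gcongr
      have a2 : 0 ≤ (Real.pi * B) * (8 * Real.pi^2 * B^2) * u := by positivity
      have a3 : 0 ≤ (Real.pi * B + 1) * (8 * Real.pi^2 * B^2) := by positivity
      nlinarith
    rw [abs_mul, abs_of_nonneg h0]
    calc D.eval y * |m2/V - m1/V * (y - t)| * ρ * (1+u)^(k+3)
        ≤ D.eval y * ((Real.pi * B + Real.pi * B + 1) * (8 * Real.pi^2 * B^2) * (1 + u)) * ρ * (1+u)^(k+3) := by gcongr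
      _ = (Real.pi * B + Real.pi * B + 1) * (8 * Real.pi^2 * B^2) * (D.eval y * ρ * (1+u)^(k+4)) := by ring
      _ ≤ _ := by gcongr; exact hDB y hy


theorem poly_anti (E : Polynomial ℝ) : ∃ F : Polynomial ℝ, F.natDegree ≤ E.natDegree + 1 ∧ F.derivative = E := by
  refine ⟨∑ i ∈ Finset.range (E.natDegree + 1), Polynomial.monomial (i+1) (E.coeff i / (i+1)), ?_, ?_⟩
  · apply Polynomial.natDegree_sum_le_of_forall_le
    intro i hi
    refine (Polynomial.natDegree_monomial_le _).trans ?_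
    have := Finset.mem_range.1 hi
    omega
  · rw [Polynomial.derivative_sum]
    conv_rhs => rw [E.as_sum_range]
    apply Finset.sum_congr rfl
    intro i hi
    rw [Polynomial.derivative_monomial]
    have : (i:ℝ) + 1 ≠ 0 := by positivity
    simp only [Nat.add_sub_cancel]
    congr 1
    push_cast
    field_simp

theorem poly_int (E : Polynomial ℝ) : ∃ F : Polynomial ℝ, F.natDegree ≤ E.natDegree + 1 ∧
    ∀ x, F.eval x = ∫ y in (-1:ℝ)..x, E.eval y := by
  obtain ⟨F, hF, hd⟩ := poly_anti E
  refine ⟨F - Polynomial.C (F.eval (-1)), by rwa [Polynomial.natDegree_sub_C], fun x => ?_⟩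
  rw [intervalIntegral.integral_eq_sub_of_hasDerivAt (f := fun x => F.eval x)]
  · simp
  · intro y _
    rw [← hd]; exact F.hasDerivAt y
  · exact poly_ii _ _ _

theorem poly_int2 (E : Polynomial ℝ) : ∃ F : Polynomial ℝ, F.natDegree ≤ E.natDegree + 2 ∧
    ∀ x, F.eval x = ∫ y in (-1:ℝ)..x, (x - y) * E.eval y := by
  obtain ⟨F, hF, h1⟩ := poly_int E
  obtain ⟨G, hG, h2⟩ := poly_int (Polynomial.X * E)
  refine ⟨Polynomial.X * F - G, ?_, fun x => ?_⟩
  · refine (Polynomial.natDegree_sub_le _ _).trans (max_le ?_ ?_)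
    · refine Polynomial.natDegree_mul_le.trans ?_
      rw [Polynomial.natDegree_X]; omega
    · refine hG.trans ?_
      have := Polynomial.natDegree_mul_le (p := Polynomial.X) (q := E)
      rw [Polynomial.natDegree_X] at this; omega
  · simp only [Polynomial.eval_sub, Polynomial.eval_mul, Polynomial.eval_X, h1, h2]
    rw [← intervalIntegral.integral_const_mul, ← intervalIntegral.integral_sub]
    · congr 1; ext y; ring
    · exact (poly_ii _ _ _).const_mul _
    · exact Continuous.intervalIntegrable (by fun_prop) _ _

theorem trunc_approx (k : ℕ) {B ρ t : ℝ} (ht : t ∈ Icc (-1:ℝ) 1) (hB : 0 < B) (hρ : 0 < ρ) (E : Polynomial ℝ)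
    (hE1 : ∫ y in (-1:ℝ)..1, E.eval y = 1)
    (hE2 : ∫ y in (-1:ℝ)..1, (y - t) * E.eval y = 0)
    (hEB : ∀ y ∈ Icc (-1:ℝ) 1, |E.eval y| * ρ * (1 + |y - t| / ρ)^(k+3) ≤ B) :
    ∃ P : Polynomial ℝ, P.natDegree ≤ E.natDegree + 2 ∧
      ∀ x ∈ Icc (-1:ℝ) 1, |max (x - t) 0 - P.eval x| * (1 + |x - t|/ρ)^k ≤ B * Real.pi * ρ := by
  obtain ⟨P, hP, hPe⟩ := poly_int2 E
  refine ⟨P, hP, ?_⟩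
  have hcE : Continuous fun y => E.eval y := Polynomial.continuous E
  have key : ∀ x ∈ Icc (-1:ℝ) 1, ∀ y ∈ Icc (-1:ℝ) 1, |x - t| ≤ |y - t| → |x - y| ≤ |y - t| →
      (1 + |x - t|/ρ)^k * ((x - y) * E.eval y) ≤ B * (1 + ((y - t)/ρ)^2)⁻¹ ∧
      -(B * (1 + ((y - t)/ρ)^2)⁻¹) ≤ (1 + |x - t|/ρ)^k * ((x - y) * E.eval y) := by
    intro x hx y hy h1 h2
    have h3 : (1 + |x - t|/ρ)^k ≤ (1 + |y - t|/ρ)^k := by gcongr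
    rw [and_comm, ← abs_le, abs_mul, abs_mul]
    have h0 : 0 ≤ (1 + |x - t|/ρ)^k := by positivity
    rw [abs_of_nonneg h0]
    set u := |y - t|/ρ with hu
    have hu0 : 0 ≤ u := by positivity
    have hyu : |y - t| = ρ * u := by rw [hu]; field_simp
    have h4 : ((y-t)/ρ)^2 = u^2 := by rw [hu, div_pow, div_pow, sq_abs]
    rw [h4, ← div_eq_mul_inv, le_div_iff₀ (by positivity)]
    have h5 : u * (1 + u^2) ≤ (1+u)^3 := by
      have : (1+u)^3 = u*(1+u^2) + (1 + 2*u+3*u^2) := by ring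
      rw [this]; have : 0 ≤ 1 + 2*u+3*u^2 := by positivity
      linarith
    calc (1 + |x - t|/ρ)^k * (|x - y| * |E.eval y|) * (1+u^2)
        ≤ (1+u)^k * ((ρ * u) * |E.eval y|) * (1+u^2) := by rw [hyu] at h2; gcongr
      _ = |E.eval y| * ρ * ((1+u)^k * (u * (1+u^2))) := by ring
      _ ≤ |E.eval y| * ρ * ((1+u)^k * (1+u)^3) := by gcongr
      _ = |E.eval y| * ρ * (1+u)^(k+3) := by ring
      _ ≤ B := hEB y hy
  have key2 : ∀ x ∈ Icc (-1:ℝ) 1, ∀ a b : ℝ, a ≤ b → Icc a b ⊆ Icc (-1) 1 →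
      (∀ y ∈ Icc a b, |x - t| ≤ |y - t| ∧ |x - y| ≤ |y - t|) →
      |∫ y in a..b, (x - y) * E.eval y| * (1 + |x - t|/ρ)^k ≤ B * Real.pi * ρ := by
    intro x hx a b hab hsub hh
    have h0 : 0 ≤ (1 + |x - t|/ρ)^k := by positivity
    have hfin : ∫ y in a..b, B * (1 + ((y - t)/ρ)^2)⁻¹ ≤ B * Real.pi * ρ := by
      rw [intervalIntegral.integral_const_mul]
      calc _ ≤ B * (ρ * Real.pi) := by gcongr; exact lor_le t hρ hab
        _ = _ := by ring
    have hi : IntervalIntegrable (fun y => (1 + |x - t|/ρ)^k * ((x - y) * E.eval y)) volume a b :=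
      Continuous.intervalIntegrable (by fun_prop) _ _
    have hi2 : IntervalIntegrable (fun y => B * (1 + ((y - t)/ρ)^2)⁻¹) volume a b :=
      (lor_ii t hρ _ _).const_mul _
    rw [mul_comm, ← abs_of_nonneg h0, ← abs_mul, ← intervalIntegral.integral_const_mul, abs_le]
    constructor
    · refine le_trans (neg_le_neg hfin) ?_
      rw [← intervalIntegral.integral_neg]
      apply intervalIntegral.integral_mono_on hab hi2.neg hi
      intro y hy
      exact (key x hx y (hsub hy) (hh y hy).1 (hh y hy).2).2
    · refine le_trans ?_ hfin
      apply intervalIntegral.integral_mono_on hab hi hi2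
      intro y hy
      exact (key x hx y (hsub hy) (hh y hy).1 (hh y hy).2).1
  intro x hx
  rcases le_total x t with hxt | hxt
  · rw [max_eq_right (by linarith), zero_sub, abs_neg, hPe]
    apply key2 x hx _ _ hx.1 (Icc_subset_Icc le_rfl hx.2)
    intro y hy
    rw [abs_of_nonpos (by linarith : x - t ≤ 0), abs_of_nonpos (by linarith [hy.2] : y - t ≤ 0),
      abs_of_nonneg (by linarith [hy.2] : 0 ≤ x - y)]
    constructor <;> linarith [hy.1, hy.2]
  · rw [max_eq_left (by linarith), hPe]
    have hii : ∀ a b, IntervalIntegrable (fun y => (x - y) * E.eval y) volume a b := fun a b =>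
      Continuous.intervalIntegrable (by fun_prop) _ _
    have h1 : ∫ y in (-1:ℝ)..1, (x - y) * E.eval y = x - t := by
      have : ∀ y, (x - y) * E.eval y = (x - t) * E.eval y - (y - t) * E.eval y := by intro y; ring
      simp_rw [this]
      rw [intervalIntegral.integral_sub ((poly_ii _ _ _).const_mul _), intervalIntegral.integral_const_mul, hE1, hE2]
      · ring
      · exact Continuous.intervalIntegrable (by fun_prop) _ _
    have h2 := intervalIntegral.integral_add_adjacent_intervals (hii (-1) x) (hii x 1)
    have h3 : x - t - ∫ y in (-1:ℝ)..x, (x - y) * E.eval y = ∫ y in x..1, (x - y) * E.eval y := by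
      rw [← h1, ← h2]; ring
    rw [h3]
    apply key2 x hx _ _ hx.2 (Icc_subset_Icc hx.1 le_rfl)
    intro y hy
    rw [abs_of_nonneg (by linarith : 0 ≤ x - t), abs_of_nonneg (by linarith [hy.1] : 0 ≤ y - t),
      abs_of_nonpos (by linarith [hy.1] : x - y ≤ 0)]
    constructor <;> linarith [hy.1, hy.2]

theorem trunc_main (k : ℕ) : ∃ C > (0:ℝ), ∀ N : ℕ, 1 ≤ N → ∀ t ∈ Icc (-1:ℝ) 1,
    8 / N ≤ Real.sqrt (1 - t^2) → ∃ P : Polynomial ℝ, P.natDegree ≤ 2 * (k+2) * (N - 1) + 3 ∧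
      ∀ x ∈ Icc (-1:ℝ) 1, |max (x - t) 0 - P.eval x| * (1 + |x - t|/(Real.sqrt (1 - t^2) / N))^(2*k)
        ≤ C * (Real.sqrt (1 - t^2) / N) := by
  set B : ℝ := 4 * 48^(2*(k+2))
  have hB : 0 < B := by positivity
  have hpi := Real.pi_pos
  set B' : ℝ := (Real.pi * B + Real.pi * B + 1) * (8 * Real.pi^2 * B^2) * B
  have hB' : 0 < B' := by positivity
  refine ⟨B' * Real.pi, by positivity, ?_⟩
  intro N hN t ht hφ
  have hN' : (0:ℝ) < N := by exact_mod_cast hN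
  have hρ : 0 < Real.sqrt (1 - t^2) / N := div_pos (lt_of_lt_of_le (by positivity) hφ) hN'
  obtain ⟨D, hD, hD0, hD1, hD2⟩ := kernel1 (k+2) N hN ht hφ rfl
  obtain ⟨E, hE, hE1, hE2, hE3⟩ := mean_corr (2*k) hB hρ D hD0 hD1 (t := t) hD2
  obtain ⟨P, hP, hP1⟩ := trunc_approx (2*k) ht hB' hρ E hE1 hE2 hE3
  exact ⟨P, by omega, hP1⟩


theorem trunc_weighted (α β : ℝ) (hα : 0 ≤ α) (hβ : 0 ≤ β) : ∃ C > (0:ℝ), ∃ r : ℕ, 2 ≤ r ∧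
    ∀ N : ℕ, 1 ≤ N → ∀ t : ℝ, 64 / (N:ℝ)^2 ≤ 1 - |t| →
    ∃ P : Polynomial ℝ, P.natDegree ≤ 2 * r * (N - 1) + 3 ∧
      ∀ x ∈ Icc (-1:ℝ) 1, jacobi α β x * |max (x - t) 0 - P.eval x| ≤
        C * jacobi α β t * (Real.sqrt (1 - t^2) / N) * (1 + ((x - t)/(Real.sqrt (1 - t^2) / N))^2)⁻¹ := by
  obtain ⟨k, hk⟩ := exists_nat_ge (α + β)
  obtain ⟨C, hC, h⟩ := trunc_main (k+1)
  refine ⟨C, hC, k+3, by omega, ?_⟩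
  intro N hN t ht
  have hN' : (0:ℝ) < N := by exact_mod_cast hN
  have h64 : 0 < 64 / (N:ℝ)^2 := by positivity
  have htlt : |t| < 1 := by linarith
  have htI := abs_lt.1 htlt
  have hsq : (8/(N:ℝ))^2 ≤ 1 - t^2 := by
    rw [div_pow, ← sq_abs t]
    have := abs_nonneg t
    have e : (8:ℝ)^2/(N:ℝ)^2 = 64/(N:ℝ)^2 := by norm_num
    rw [e]; nlinarith
  have hφ : 8/(N:ℝ) ≤ Real.sqrt (1 - t^2) := Real.le_sqrt_of_sq_le hsq
  obtain ⟨P, hP, hPx⟩ := h N hN t ⟨htI.1.le, htI.2.le⟩ hφ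
  refine ⟨P, hP, ?_⟩
  intro x hx
  have hφ2 : Real.sqrt (1 - t^2) ^ 2 = 1 - t^2 := Real.sq_sqrt (by nlinarith)
  set φ := Real.sqrt (1 - t^2) with hφd
  have hφ0 : 0 < φ := lt_of_lt_of_le (by positivity) hφ
  set ρ := φ / N with hρ
  have hρ0 : 0 < ρ := by positivity
  have hρle : 8 * ρ ≤ 1 - t^2 := by
    rw [← hφ2, hρ, sq]
    calc 8 * (φ/N) = (8/N) * φ := by ring
      _ ≤ φ * φ := by gcongr
  have hx1 := hPx x hx
  set u := |x - t|/ρ with hu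
  have hu0 : 0 ≤ u := by positivity
  have hxu : |x - t| = ρ * u := by rw [hu]; field_simp
  have hsq2 : ((x-t)/ρ)^2 = u^2 := by rw [hu, div_pow (x-t) ρ, div_pow |x-t| ρ, sq_abs]
  have hp1 : 1 + x ≤ (1 + t) * (1 + u) := by
    have := le_abs_self (x - t)
    have : ρ * u ≤ (1+t) * u := by gcongr; nlinarith
    nlinarith
  have hp2 : 1 - x ≤ (1 - t) * (1 + u) := by
    have := neg_abs_le (x - t)
    have : ρ * u ≤ (1-t) * u := by gcongr; nlinarith
    nlinarith
  have hw : jacobi α β x ≤ jacobi α β t * (1+u)^k := by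
    unfold jacobi
    have a1 : (1+x)^α ≤ (1+t)^α * (1+u)^α := by
      rw [← Real.mul_rpow (by linarith) (by linarith)]
      exact Real.rpow_le_rpow (by linarith [hx.1]) hp1 hα
    have a2 : (1-x)^β ≤ (1-t)^β * (1+u)^β := by
      rw [← Real.mul_rpow (by linarith) (by linarith)]
      exact Real.rpow_le_rpow (by linarith [hx.2]) hp2 hβ
    have b1 : 0 ≤ (1+t)^α := Real.rpow_nonneg (by linarith) _
    have b2 : 0 ≤ (1-t)^β := Real.rpow_nonneg (by linarith) _
    have b3 : 0 ≤ (1-x)^β := Real.rpow_nonneg (by linarith [hx.2]) _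
    calc _ ≤ ((1+t)^α * (1+u)^α) * ((1-t)^β * (1+u)^β) := by gcongr
      _ = (1+t)^α * (1-t)^β * ((1+u)^(α+β)) := by rw [Real.rpow_add (by linarith)]; ring
      _ ≤ _ := by
        gcongr
        rw [← Real.rpow_natCast]
        exact Real.rpow_le_rpow_of_exponent_le (by linarith) hk
  have hwt : 0 ≤ jacobi α β t :=
    mul_nonneg (Real.rpow_nonneg (by linarith) _) (Real.rpow_nonneg (by linarith) _)
  rw [hsq2, ← div_eq_mul_inv, le_div_iff₀ (by positivity)]
  calc jacobi α β x * |max (x - t) 0 - P.eval x| * (1+u^2)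
      ≤ jacobi α β t * (1+u)^k * |max (x - t) 0 - P.eval x| * (1+u)^(k+2) := by
        gcongr
        calc 1 + u^2 ≤ (1+u)^2 := by nlinarith
          _ ≤ _ := pow_le_pow_right₀ (by linarith) (by omega)
    _ = jacobi α β t * (|max (x - t) 0 - P.eval x| * (1+u)^(2*(k+1))) := by ring
    _ ≤ jacobi α β t * (C * ρ) := by gcongr
    _ = _ := by ring


theorem jacobi_pos (α β : ℝ) {x : ℝ} (hx : x ∈ Ioo (-1:ℝ) 1) : 0 < jacobi α β x :=
  mul_pos (Real.rpow_pos_of_pos (by linarith [hx.1]) _) (Real.rpow_pos_of_pos (by linarith [hx.2]) _)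

theorem jacobi_cont (α β : ℝ) (hα : 0 ≤ α) (hβ : 0 ≤ β) : Continuous (jacobi α β) := by
  unfold jacobi
  exact ((continuous_const.add continuous_id).rpow_const (fun _ => Or.inr hα)).mul
    ((continuous_const.sub continuous_id).rpow_const (fun _ => Or.inr hβ))

theorem jacobi_le (α β : ℝ) (hα : 0 ≤ α) (hβ : 0 ≤ β) {x : ℝ} (hx : x ∈ Icc (-1:ℝ) 1) :
    jacobi α β x ≤ 2^(α+β) := by
  unfold jacobi
  rw [Real.rpow_add (by norm_num)]
  have : (1+x)^α ≤ 2^α := Real.rpow_le_rpow (by linarith [hx.1]) (by linarith [hx.2]) hα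
  have : (1-x)^β ≤ 2^β := Real.rpow_le_rpow (by linarith [hx.2]) (by linarith [hx.1]) hβ
  have : 0 ≤ (1-x)^β := Real.rpow_nonneg (by linarith [hx.2]) _
  gcongr

theorem jacobi_succ (α β : ℝ) {x : ℝ} (hx : x ∈ Ioo (-1:ℝ) 1) :
    jacobi (α+1) (β+1) x = jacobi α β x * ((1+x)*(1-x)) := by
  unfold jacobi
  rw [Real.rpow_add_one (by linarith [hx.1]), Real.rpow_add_one (by linarith [hx.2])]; ring

theorem jacobi_le_right (α β : ℝ) (hα : 0 ≤ α) (hβ : 0 ≤ β) {x y : ℝ} (hx : x ∈ Ioo (-1:ℝ) 1) (hy : y ∈ Ioo (-1:ℝ) 1)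
    (h1 : x ≤ y) (h2 : 1 - x ≤ 2 * (1 - y)) : jacobi α β x ≤ 2^(α+β) * jacobi α β y := by
  unfold jacobi
  have a1 : (1+x)^α ≤ (1+y)^α := Real.rpow_le_rpow (by linarith [hx.1]) (by linarith) hα
  have a2 : (1-x)^β ≤ 2^β * (1-y)^β := by
    rw [← Real.mul_rpow (by norm_num) (by linarith [hy.2])]
    exact Real.rpow_le_rpow (by linarith [hx.2]) h2 hβ
  have b1 : 0 ≤ (1-x)^β := Real.rpow_nonneg (by linarith [hx.2]) _
  have b2 : 0 ≤ (1+y)^α := Real.rpow_nonneg (by linarith [hy.1]) _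
  have b3 : 0 ≤ (1-y)^β := Real.rpow_nonneg (by linarith [hy.2]) _
  have b4 : (1:ℝ) ≤ 2^α := Real.one_le_rpow (by norm_num) hα
  rw [Real.rpow_add (by norm_num)]
  calc _ ≤ (1+y)^α * (2^β * (1-y)^β) := by gcongr
    _ ≤ 2^α * ((1+y)^α * (2^β * (1-y)^β)) := le_mul_of_one_le_left (by positivity) b4
    _ = _ := by ring

theorem jacobi_neg (α β x : ℝ) : jacobi α β (-x) = jacobi β α x := by
  unfold jacobi; rw [mul_comm]; congr 2 <;> ring

theorem jacobi_le_left (α β : ℝ) (hα : 0 ≤ α) (hβ : 0 ≤ β) {x y : ℝ} (hx : x ∈ Ioo (-1:ℝ) 1) (hy : y ∈ Ioo (-1:ℝ) 1)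
    (h1 : y ≤ x) (h2 : 1 + x ≤ 2 * (1 + y)) : jacobi α β x ≤ 2^(α+β) * jacobi α β y := by
  have := jacobi_le_right β α hβ hα (x := -x) (y := -y) ⟨by linarith [hx.2], by linarith [hx.1]⟩
    ⟨by linarith [hy.2], by linarith [hy.1]⟩ (by linarith) (by linarith)
  rwa [jacobi_neg, jacobi_neg, add_comm β α] at this

theorem conv_of_kmono {f : ℝ → ℝ} (h : kMonotoneOn 2 f) : ConvexOn ℝ (Ioo (-1:ℝ) 1) f := by
  apply convexOn_of_slope_mono_adjacent (convex_Ioo _ _)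
  intro x y z hx hz hxy hyz
  have hy : y ∈ Ioo (-1:ℝ) 1 := ⟨by linarith [hx.1], by linarith [hz.2]⟩
  have h1 := h ![x, y, z] (by
    intro i j hij
    fin_cases i <;> fin_cases j <;> simp at hij ⊢ <;> linarith) (by
    intro i; fin_cases i <;> simp [hx.1, hx.2, hy.1, hy.2, hz.1, hz.2])
  have e0 : (Finset.univ : Finset (Fin 3)).erase 0 = {1, 2} := by decide
  have e1 : (Finset.univ : Finset (Fin 3)).erase 1 = {0, 2} := by decide
  have e2 : (Finset.univ : Finset (Fin 3)).erase 2 = {0, 1} := by decide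
  change 0 ≤ ∑ i : Fin 3, f (![x, y, z] i) / ∏ j ∈ (Finset.univ : Finset (Fin 3)).erase i, (![x, y, z] i - ![x, y, z] j) at h1
  rw [Fin.sum_univ_three, e0, e1, e2] at h1
  rw [Finset.prod_pair (by decide), Finset.prod_pair (by decide), Finset.prod_pair (by decide)] at h1
  simp at h1
  have p1 : 0 < y - x := by linarith
  have p2 : 0 < z - y := by linarith
  have p3 : 0 < z - x := by linarith
  have key : f x / ((x - y) * (x - z)) + f y / ((y - x) * (y - z)) + f z / ((z - x) * (z - y))
     = ((f z - f y)/(z - y) - (f y - f x)/(y-x)) / (z - x) := by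
    have q1 : x - y ≠ 0 := by linarith
    have q2 : x - z ≠ 0 := by linarith
    have q3 : y - z ≠ 0 := by linarith
    rw [show x - y = -(y-x) by ring, show x - z = -(z-x) by ring, show y - z = -(z-y) by ring]
    field_simp
    ring
  rw [key, le_div_iff₀ p3, zero_mul] at h1
  linarith

theorem kmono_of_conv {f : ℝ → ℝ} (h : ConvexOn ℝ (Ioo (-1:ℝ) 1) f) : kMonotoneOn 2 f := by
  intro x hinj hx
  have e0 : (Finset.univ : Finset (Fin 3)).erase 0 = {1, 2} := by decide
  have e1 : (Finset.univ : Finset (Fin 3)).erase 1 = {0, 2} := by decide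
  have e2 : (Finset.univ : Finset (Fin 3)).erase 2 = {0, 1} := by decide
  change 0 ≤ ∑ i : Fin 3, f (x i) / ∏ j ∈ (Finset.univ : Finset (Fin 3)).erase i, (x i - x j)
  rw [Fin.sum_univ_three, e0, e1, e2]
  rw [Finset.prod_pair (by decide), Finset.prod_pair (by decide), Finset.prod_pair (by decide)]
  have main : ∀ a b c : ℝ, a ∈ Ioo (-1:ℝ) 1 → c ∈ Ioo (-1:ℝ) 1 → a < b → b < c →
      0 ≤ f a / ((a - b) * (a - c)) + f b / ((b - a) * (b - c)) + f c / ((c - a) * (c - b)) := by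
    intro x y z hx hz hxy hyz
    have h1 := h.slope_mono_adjacent hx hz hxy hyz
    have p1 : 0 < y - x := by linarith
    have p2 : 0 < z - y := by linarith
    have p3 : 0 < z - x := by linarith
    have key : f x / ((x - y) * (x - z)) + f y / ((y - x) * (y - z)) + f z / ((z - x) * (z - y))
       = ((f z - f y)/(z - y) - (f y - f x)/(y-x)) / (z - x) := by
      rw [show x - y = -(y-x) by ring, show x - z = -(z-x) by ring, show y - z = -(z-y) by ring]
      field_simp
      ring
    rw [key]
    exact div_nonneg (by linarith) p3.le
  have n1 : x 0 ≠ x 1 := fun hh => absurd (hinj hh) (by decide)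
  have n2 : x 0 ≠ x 2 := fun hh => absurd (hinj hh) (by decide)
  have n3 : x 1 ≠ x 2 := fun hh => absurd (hinj hh) (by decide)
  generalize hA : x 0 = a at *
  generalize hB : x 1 = b at *
  generalize hC : x 2 = c at *
  have ha : a ∈ Ioo (-1:ℝ) 1 := hA ▸ hx 0
  have hb : b ∈ Ioo (-1:ℝ) 1 := hB ▸ hx 1
  have hc : c ∈ Ioo (-1:ℝ) 1 := hC ▸ hx 2
  rcases lt_or_gt_of_ne n1 with h1 | h1 <;> rcases lt_or_gt_of_ne n2 with h2 | h2 <;>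
    rcases lt_or_gt_of_ne n3 with h3 | h3
  · have := main a b c ha hc h1 h3; linarith
  · have := main a c b ha hb h2 h3
    rw [mul_comm (a - c), mul_comm (b - a), mul_comm (c - a)] at this
    rw [mul_comm (b - a), mul_comm (c - a)]; linarith
  · linarith
  · have := main c a b hc hb h2 h1
    rw [mul_comm (a - c), mul_comm (b - c)] at this; linarith
  · have := main b a c hb hc h1 h2
    rw [mul_comm (c - b)] at this; linarith
  · linarith
  · have := main b c a hb ha h3 h2
    rw [mul_comm (a - b), mul_comm (c - b)] at this
    rw [mul_comm (a - b), mul_comm (b - a)]; linarith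
  · have := main c b a hc ha h3 h1
    rw [mul_comm (a - c), mul_comm (b - c), mul_comm (c - b)] at this; linarith

theorem bd_of_B {α β : ℝ} (hα : 0 ≤ α) (hβ : 0 ≤ β) {f : ℝ → ℝ} (hc : ConvexOn ℝ (Ioo (-1:ℝ) 1) f)
    (hB : f ∈ BSet ∞ α β) : ∀ x ∈ Ioo (-1:ℝ) 1, jacobi α β x * |f x| ≤ 1 := by
  have hcont : ContinuousOn f (Ioo (-1:ℝ) 1) := hc.continuousOn isOpen_Ioo
  have hcont2 : ContinuousOn (fun x => jacobi α β x * |f x|) (Ioo (-1:ℝ) 1) :=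
    (jacobi_cont α β hα hβ).continuousOn.mul hcont.abs
  have h1 := hB.2
  unfold LpOn at h1
  rw [eLpNorm_exponent_top] at h1
  have h2 := enorm_ae_le_eLpNormEssSup (fun x => jacobi α β x * f x) (volume.restrict (Icc (-1:ℝ) 1))
  rw [h1] at h2
  have h3 : ∀ᵐ x ∂(volume.restrict (Ioo (-1:ℝ) 1)), ‖jacobi α β x * f x‖ₑ ≤ 1 :=
    ae_restrict_of_ae_restrict_of_subset Ioo_subset_Icc_self h2
  have hop : IsOpen (Ioo (-1:ℝ) 1 ∩ (fun x => jacobi α β x * |f x|) ⁻¹' Ioi 1) :=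
    hcont2.isOpen_inter_preimage isOpen_Ioo isOpen_Ioi
  have hz : volume (Ioo (-1:ℝ) 1 ∩ (fun x => jacobi α β x * |f x|) ⁻¹' Ioi 1) = 0 := by
    rw [ae_restrict_iff' measurableSet_Ioo] at h3
    refine measure_mono_null ?_ (ae_iff.1 h3)
    rintro x ⟨hx, hx2⟩
    simp only [mem_ofPred_eq, Classical.not_imp, not_le]
    refine ⟨hx, ?_⟩
    rw [← ofReal_norm, Real.norm_eq_abs, abs_mul, abs_of_pos (jacobi_pos α β hx)]
    simpa using hx2
  rw [hop.measure_eq_zero_iff (μ := volume)] at hz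
  intro x hx
  by_contra hcon
  push Not at hcon
  have : x ∈ (∅ : Set ℝ) := hz ▸ ⟨hx, hcon⟩
  exact this

theorem slope_up {α β : ℝ} (hα : 0 ≤ α) (hβ : 0 ≤ β) {f : ℝ → ℝ} (hc : ConvexOn ℝ (Ioo (-1:ℝ) 1) f)
    (hb : ∀ x ∈ Ioo (-1:ℝ) 1, jacobi α β x * |f x| ≤ 1) {x y : ℝ} (hx : x ∈ Ioo (-1:ℝ) 1) (hy : y ∈ Ioo (-1:ℝ) 1)
    (hxy : x < y) : (f y - f x)/(y - x) * jacobi (α+1) (β+1) y ≤ 4 * (1 + 2^(α+β)) := by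
  set z := (1 + y)/2 with hz
  have hzI : z ∈ Ioo (-1:ℝ) 1 := ⟨by linarith [hy.1], by linarith [hy.2]⟩
  have hyz : y < z := by linarith [hy.2]
  have h1 := hc.slope_mono_adjacent hx hzI hxy hyz
  have h2 := jacobi_le_right α β hα hβ hy hzI hyz.le (by linarith)
  have wy := jacobi_pos α β hy
  have wz := jacobi_pos α β hzI
  rw [jacobi_succ α β hy]
  have p1 : 0 < 1 - y := by linarith [hy.2]
  have p2 : 0 < 1 + y := by linarith [hy.1]
  have h3 : (f z - f y)/(z - y) * (jacobi α β y * ((1+y)*(1-y))) = 2 * (1+y) * (jacobi α β y * f z - jacobi α β y * f y) := by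
    have : z - y = (1-y)/2 := by rw [hz]; ring
    rw [this]; field_simp
  have h4 : jacobi α β y * f z ≤ 2^(α+β) := by
    calc _ ≤ jacobi α β y * |f z| := by gcongr; exact le_abs_self _
      _ ≤ 2^(α+β) * jacobi α β z * |f z| := by gcongr
      _ = 2^(α+β) * (jacobi α β z * |f z|) := by ring
      _ ≤ 2^(α+β) * 1 := by gcongr; exact hb z hzI
      _ = _ := mul_one _
  have h5 : -1 ≤ jacobi α β y * f y := by
    have := hb y hy
    have := neg_abs_le (f y)
    nlinarith
  calc _ ≤ (f z - f y)/(z - y) * (jacobi α β y * ((1+y)*(1-y))) := by gcongr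
    _ = _ := h3
    _ ≤ 2 * (1+y) * (1 + 2^(α+β)) := by gcongr; linarith
    _ ≤ _ := by
      have : (0:ℝ) ≤ 1 + 2^(α+β) := by positivity
      nlinarith [hy.2]

theorem slope_down {α β : ℝ} (hα : 0 ≤ α) (hβ : 0 ≤ β) {f : ℝ → ℝ} (hc : ConvexOn ℝ (Ioo (-1:ℝ) 1) f)
    (hb : ∀ x ∈ Ioo (-1:ℝ) 1, jacobi α β x * |f x| ≤ 1) {x y : ℝ} (hx : x ∈ Ioo (-1:ℝ) 1) (hy : y ∈ Ioo (-1:ℝ) 1)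
    (hxy : x < y) : -(4 * (1 + 2^(α+β))) ≤ (f y - f x)/(y - x) * jacobi (α+1) (β+1) x := by
  have hc' : ConvexOn ℝ (Ioo (-1:ℝ) 1) (fun x => f (-x)) := by
    have := hc.comp_linearMap (-LinearMap.id)
    have hs : (⇑(-LinearMap.id : ℝ →ₗ[ℝ] ℝ)) ⁻¹' Ioo (-1) 1 = Ioo (-1:ℝ) 1 := by
      ext z
      simp only [mem_preimage, LinearMap.neg_apply, LinearMap.id_apply, mem_Ioo]
      constructor <;> rintro ⟨a, b⟩ <;> constructor <;> linarith
    rw [hs] at this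
    exact this
  have hneg : ∀ {x : ℝ}, x ∈ Ioo (-1:ℝ) 1 → -x ∈ Ioo (-1:ℝ) 1 := fun h => ⟨by linarith [h.2], by linarith [h.1]⟩
  have := slope_up hβ hα hc' (fun x hx => by
    have := hb (-x) (hneg hx); rwa [jacobi_neg] at this) (hneg hy) (hneg hx) (by linarith)
  rw [jacobi_neg, add_comm β α] at this
  simp only [neg_neg] at this
  have e : (f y - f x)/(y - x) = -((f x - f y)/(-x - -y)) := by
    rw [← neg_div]; congr 1 <;> ring
  rw [e]; linarith


theorem pl_identity (F s τ : ℕ → ℝ) (hF : ∀ i, F (i+1) = F i + s i * (τ (i+1) - τ i)) (x : ℝ) (j : ℕ) :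
    F 0 + s 0 * (x - τ 0) + ∑ i ∈ Finset.range j, (s (i+1) - s i) * (x - τ (i+1)) = F j + s j * (x - τ j) := by
  induction j with
  | zero => simp
  | succ j ih => rw [Finset.sum_range_succ, ← add_assoc, ih, hF j]; ring

theorem pl_eval (F s τ : ℕ → ℝ) (hτ : Monotone τ) (hF : ∀ i, F (i+1) = F i + s i * (τ (i+1) - τ i)) (x : ℝ)
    (M j : ℕ) (hj : j ≤ M) (h1 : j = 0 ∨ τ j ≤ x) (h2 : j = M ∨ x ≤ τ (j+1)) :
    F 0 + s 0 * (x - τ 0) + ∑ i ∈ Finset.range M, (s (i+1) - s i) * max (x - τ (i+1)) 0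
      = F j + s j * (x - τ j) := by
  rw [← pl_identity F s τ hF x j]
  congr 1
  rw [← Finset.sum_range_add_sum_Ico _ hj]
  have e1 : ∑ i ∈ Finset.range j, (s (i+1) - s i) * max (x - τ (i+1)) 0
      = ∑ i ∈ Finset.range j, (s (i+1) - s i) * (x - τ (i+1)) := by
    refine Finset.sum_congr rfl fun i hi => ?_
    rw [Finset.mem_range] at hi
    have : τ (i+1) ≤ τ j := hτ (by omega)
    have : τ j ≤ x := by
      rcases h1 with h | h
      · omega
      · exact h
    rw [max_eq_left (by linarith)]
  have e2 : ∑ i ∈ Finset.Ico j M, (s (i+1) - s i) * max (x - τ (i+1)) 0 = 0 := by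
    refine Finset.sum_eq_zero fun i hi => ?_
    rw [Finset.mem_Ico] at hi
    have : τ (j+1) ≤ τ (i+1) := hτ (by omega)
    have : x ≤ τ (j+1) := by
      rcases h2 with h | h
      · omega
      · exact h
    rw [max_eq_right (by linarith), mul_zero]
  rw [e1, e2, add_zero]

theorem pl_exists (τ : ℕ → ℝ) (x : ℝ) (M : ℕ) :
    ∃ j ≤ M, (j = 0 ∨ τ j ≤ x) ∧ (j = M ∨ x ≤ τ (j+1)) := by
  induction M with
  | zero => exact ⟨0, le_rfl, Or.inl rfl, Or.inl rfl⟩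
  | succ M ih =>
    by_cases h : x ≤ τ (M+1)
    · obtain ⟨j, hj, a, b⟩ := ih
      refine ⟨j, by omega, a, Or.inr ?_⟩
      rcases b with b | b
      · rw [b]; exact h
      · exact b
    · exact ⟨M+1, le_rfl, Or.inr (by linarith), Or.inl rfl⟩

theorem abel_bd (s p L : ℕ → ℝ) (K : ℝ) (M : ℕ) (h0 : |s 0| * p 0 ≤ K) (hp : ∀ i ≤ M, 0 < p i)
    (hM : |s M| * p M ≤ K)
    (h : ∀ i < M, |s i| * |p (i+1) - p i| ≤ K * (L (i+1) - L i)) :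
    ∑ i ∈ Finset.range M, (s (i+1) - s i) * p (i+1) ≤ 2 * K + K * (L M - L 0) := by
  have key : ∀ j, j ≤ M → ∑ i ∈ Finset.range j, (s (i+1) - s i) * p (i+1) ≤
      s j * p j - s 0 * p 0 + K * (L j - L 0) := by
    intro j
    induction j with
    | zero => intro _; simp
    | succ j ih =>
      intro hj
      have := ih (by omega)
      have h3 := h j (by omega)
      rw [← abs_mul] at h3
      have := neg_abs_le (s j * (p (j+1) - p j))
      rw [Finset.sum_range_succ]
      nlinarith
  have := key M le_rfl
  have a := le_abs_self (s M)
  have b := neg_abs_le (s 0)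
  have := hp M le_rfl
  have := hp 0 (by omega)
  nlinarith

theorem log_diff_bd {s a b K : ℝ} (ha : 0 < a) (hb : 0 < b) (h1 : |s| * a ≤ K) (h2 : |s| * b ≤ K) :
    |s| * |b - a| ≤ K * |Real.log b - Real.log a| := by
  have main : ∀ a b : ℝ, 0 < a → 0 < b → |s| * b ≤ K → a ≤ b →
      |s| * |b - a| ≤ K * |Real.log b - Real.log a| := by
    intro a b ha hb h2 hab
    have h3 := Real.one_sub_inv_le_log_of_pos (x := b / a) (by positivity)
    rw [Real.log_div hb.ne' ha.ne', inv_div] at h3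
    have hK : 0 ≤ K := le_trans (by positivity) h2
    rw [abs_of_nonneg (by linarith : 0 ≤ b - a)]
    have h4 : 0 ≤ 1 - a / b := by
      rw [sub_nonneg, div_le_one hb]; exact hab
    calc |s| * (b - a) = |s| * b * (1 - a/b) := by field_simp
      _ ≤ K * (1 - a / b) := by gcongr
      _ ≤ K * |Real.log b - Real.log a| := by gcongr; exact h3.trans (le_abs_self _)
  rcases le_total a b with h | h
  · exact main a b ha hb h2 h
  · rw [abs_sub_comm b a, abs_sub_comm (Real.log b)]
    exact main b a hb ha h1 h

def Lfun (α β x : ℝ) : ℝ := (α+1) * Real.log (1+x) - (β+1) * Real.log (1-x)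

theorem log_jacobi_bd (α β : ℝ) (hα : 0 ≤ α) (hβ : 0 ≤ β) {x y : ℝ} (hx : x ∈ Ioo (-1:ℝ) 1) (hy : y ∈ Ioo (-1:ℝ) 1)
    (hxy : x ≤ y) : |Real.log (jacobi (α+1) (β+1) y) - Real.log (jacobi (α+1) (β+1) x)| ≤
      Lfun α β y - Lfun α β x := by
  have e : ∀ z ∈ Ioo (-1:ℝ) 1, Real.log (jacobi (α+1) (β+1) z) = (α+1) * Real.log (1+z) + (β+1) * Real.log (1-z) := by
    intro z hz
    have p1 : 0 < 1 + z := by linarith [hz.1]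
    have p2 : 0 < 1 - z := by linarith [hz.2]
    unfold jacobi
    rw [Real.log_mul (Real.rpow_pos_of_pos p1 _).ne' (Real.rpow_pos_of_pos p2 _).ne',
      Real.log_rpow p1, Real.log_rpow p2]
  rw [e x hx, e y hy]
  unfold Lfun
  have l1 : Real.log (1+x) ≤ Real.log (1+y) := Real.log_le_log (by linarith [hx.1]) (by linarith)
  have l2 : Real.log (1-y) ≤ Real.log (1-x) := Real.log_le_log (by linarith [hy.2]) (by linarith)
  have m1 : 0 ≤ (α+1) * (Real.log (1+y) - Real.log (1+x)) := mul_nonneg (by linarith) (by linarith)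
  have m2 : 0 ≤ (β+1) * (Real.log (1-x) - Real.log (1-y)) := mul_nonneg (by linarith) (by linarith)
  rw [abs_le]
  constructor <;> nlinarith

theorem Lfun_bd (α β : ℝ) (hα : 0 ≤ α) (hβ : 0 ≤ β) {δ x y : ℝ} (hδ : 0 < δ)
    (hx : -1 + δ ≤ x) (hx1 : x < 1) (hy : y ≤ 1 - δ) (hy1 : -1 < y) :
    Lfun α β y - Lfun α β x ≤ (α+β+2) * Real.log (2/δ) := by
  unfold Lfun
  rw [Real.log_div (by norm_num) hδ.ne']
  have l1 : Real.log δ ≤ Real.log (1+x) := Real.log_le_log hδ (by linarith)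
  have l2 : Real.log (1-x) ≤ Real.log 2 := Real.log_le_log (by linarith) (by linarith)
  have l3 : Real.log δ ≤ Real.log (1-y) := Real.log_le_log hδ (by linarith)
  have l4 : Real.log (1+y) ≤ Real.log 2 := Real.log_le_log (by linarith) (by linarith)
  nlinarith

set_option maxHeartbeats 1000000 in
theorem grid_lemma (α β : ℝ) (hα : 0 ≤ α) (hβ : 0 ≤ β) :
    ∃ K2 > 0, ∃ K3 > 0, ∀ f : ℝ → ℝ, ConvexOn ℝ (Ioo (-1:ℝ) 1) f →
      (∀ x ∈ Ioo (-1:ℝ) 1, jacobi α β x * |f x| ≤ 1) → ∀ δ > 0, δ ≤ 1/2 → ∀ ε > 0,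
      ∃ M : ℕ, ∃ t c : ℕ → ℝ, ∃ a b : ℝ, (∀ i < M, 0 ≤ c i ∧ |t i| ≤ 1 - δ) ∧
        ∑ i ∈ Finset.range M, c i * jacobi (α+1) (β+1) (t i) ≤ K2 * (1 + Real.log (2/δ)) ∧
        ∀ x ∈ Ioo (-1:ℝ) 1, jacobi α β x * |f x - (a + b * x + ∑ i ∈ Finset.range M, c i * max (x - t i) 0)|
          ≤ if |x| ≤ 1 - δ then ε else K3 := by
  set W : ℝ := 2^(α+β) with hW
  have hWpos : 0 < W := by positivity
  set K : ℝ := 4 * (1 + W) with hK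
  have hKpos : 0 < K := by positivity
  set V : ℝ := 2^((α+1)+(β+1)) with hV
  have hV1 : 1 ≤ V := Real.one_le_rpow (by norm_num) (by linarith)
  set K1 : ℝ := K * V with hK1
  have hK1pos : 0 < K1 := by positivity
  have hKK1 : K ≤ K1 := le_mul_of_one_le_right hKpos.le hV1
  refine ⟨K1 * (α+β+4), by positivity, 1 + W * (1 + K1), by positivity, ?_⟩
  intro f hf hb δ hδ hδ2 ε hε
  have prod1 : δ ≤ (1 + (-1+δ)) * (1 - (-1+δ)) := by nlinarith
  have prod2 : δ ≤ (1 + (1-δ)) * (1 - (1-δ)) := by nlinarith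
  set m : ℝ := δ^(α+1) * δ^(β+1) with hm
  have hmpos : 0 < m := by positivity
  set S : ℝ := K / m with hS
  have hSpos : 0 < S := by positivity
  obtain ⟨M, hM⟩ := exists_nat_gt (max (2/δ) (2 * (2 * S * W) / ε))
  have hM1 : 2/δ < M := lt_of_le_of_lt (le_max_left _ _) hM
  have hM2 : 2 * (2 * S * W) / ε < M := lt_of_le_of_lt (le_max_right _ _) hM
  have hMpos : (0:ℝ) < M + 1 := by positivity
  set h : ℝ := (2 - 2*δ)/(M+1) with hh
  have hhpos : 0 < h := div_pos (by linarith) hMpos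
  have hhM : h * (M+1) = 2 - 2*δ := by rw [hh]; field_simp
  have hhδ : h ≤ δ := by
    rw [hh, div_le_iff₀ hMpos]
    rw [div_lt_iff₀ hδ] at hM1
    nlinarith
  have hhε : W * (2 * S * h) ≤ ε := by
    have : W * (2 * S * h) = (2 * S * W) * (2 - 2*δ) / (M+1) := by rw [hh]; ring
    rw [this, div_le_iff₀ hMpos]
    rw [div_lt_iff₀ hε] at hM2
    have : 0 < 2 * S * W := by positivity
    nlinarith
  set τ : ℕ → ℝ := fun i => -1 + δ + i * h with hτ
  have τstep : ∀ i, τ (i+1) - τ i = h := by intro i; simp only [hτ]; push_cast; ring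
  have τ0 : τ 0 = -1 + δ := by simp [hτ]
  have τM : τ (M+1) = 1 - δ := by
    simp only [hτ]; push_cast; linarith
  have τmono : Monotone τ := monotone_nat_of_le_succ fun i => by linarith [τstep i]
  have τlo : ∀ i, -1 + δ ≤ τ i := fun i => τ0 ▸ τmono (Nat.zero_le i)
  have τhi : ∀ i ≤ M+1, τ i ≤ 1 - δ := fun i hi => τM ▸ τmono hi
  have inI : ∀ z, -1 + δ ≤ z → z ≤ 1 - δ → z ∈ Ioo (-1:ℝ) 1 := fun z h1 h2 => ⟨by linarith, by linarith⟩
  have τI : ∀ i ≤ M+1, τ i ∈ Ioo (-1:ℝ) 1 := fun i hi => inI _ (τlo i) (τhi i hi)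
  set ψ : ℝ → ℝ := jacobi (α+1) (β+1) with hψ
  have ψpos : ∀ z ∈ Ioo (-1:ℝ) 1, 0 < ψ z := fun z hz => jacobi_pos _ _ hz
  have ψm : ∀ z, -1 + δ ≤ z → z ≤ 1 - δ → m ≤ ψ z := by
    intro z h1 h2
    simp only [hψ, jacobi, hm]
    have a1 : δ^(α+1) ≤ (1+z)^(α+1) := Real.rpow_le_rpow hδ.le (by linarith) (by linarith)
    have a2 : δ^(β+1) ≤ (1-z)^(β+1) := Real.rpow_le_rpow hδ.le (by linarith) (by linarith)
    have : 0 ≤ (1+z)^(α+1) := Real.rpow_nonneg (by linarith) _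
    gcongr
  have slopeS : ∀ x y, -1 + δ ≤ x → x < y → y ≤ 1 - δ → |(f y - f x)/(y - x)| ≤ S := by
    intro x y hx hxy hy
    have hxI := inI x hx (by linarith)
    have hyI := inI y (by linarith) hy
    have u := slope_up hα hβ hf hb hxI hyI hxy
    have d := slope_down hα hβ hf hb hxI hyI hxy
    have px := ψm x hx (by linarith)
    have py := ψm y (by linarith) hy
    rw [hS, le_div_iff₀ hmpos]
    rcases le_total 0 ((f y - f x)/(y - x)) with g | g
    · rw [abs_of_nonneg g]
      calc _ ≤ (f y - f x)/(y - x) * ψ y := by gcongr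
        _ ≤ _ := u
    · rw [abs_of_nonpos g]
      have : (f y - f x)/(y - x) * ψ x ≤ (f y - f x)/(y - x) * m := mul_le_mul_of_nonpos_left px g
      have : -K ≤ (f y - f x)/(y - x) * ψ x := d
      linarith
  have incS : ∀ x y, -1 + δ ≤ x → x ≤ y → y ≤ 1 - δ → |f y - f x| ≤ S * (y - x) := by
    intro x y hx hxy hy
    rcases hxy.eq_or_lt with g | g
    · subst g; simp
    · have := slopeS x y hx g hy
      rwa [abs_div, abs_of_pos (by linarith : 0 < y - x), div_le_iff₀ (by linarith)] at this
  set s : ℕ → ℝ := fun i => (f (τ (i+1)) - f (τ i))/h with hs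
  have sS : ∀ i ≤ M, |s i| ≤ S := by
    intro i hi
    have := slopeS (τ i) (τ (i+1)) (τlo i) (by linarith [τstep i]) (τhi _ (by omega))
    rwa [τstep i] at this
  have sup : ∀ i ≤ M, s i * ψ (τ (i+1)) ≤ K := by
    intro i hi
    have := slope_up hα hβ hf hb (τI i (by omega)) (τI (i+1) (by omega)) (by linarith [τstep i])
    rwa [τstep i] at this
  have sdn : ∀ i ≤ M, -K ≤ s i * ψ (τ i) := by
    intro i hi
    have := slope_down hα hβ hf hb (τI i (by omega)) (τI (i+1) (by omega)) (by linarith [τstep i])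
    rwa [τstep i] at this
  have ψr : ∀ i ≤ M, ψ (τ i) ≤ V * ψ (τ (i+1)) := by
    intro i hi
    exact jacobi_le_right (α+1) (β+1) (by linarith) (by linarith) (τI i (by omega)) (τI (i+1) (by omega))
      (by linarith [τstep i]) (by linarith [τstep i, τhi (i+1) (by omega)])
  have ψl : ∀ i ≤ M, ψ (τ (i+1)) ≤ V * ψ (τ i) := by
    intro i hi
    exact jacobi_le_left (α+1) (β+1) (by linarith) (by linarith) (τI (i+1) (by omega)) (τI i (by omega))
      (by linarith [τstep i]) (by linarith [τstep i, τlo i])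
  have sK : ∀ i ≤ M, |s i| * ψ (τ i) ≤ K1 ∧ |s i| * ψ (τ (i+1)) ≤ K1 := by
    intro i hi
    have u := sup i hi
    have d := sdn i hi
    rcases le_total 0 (s i) with g | g
    · rw [abs_of_nonneg g]
      refine ⟨?_, by linarith⟩
      calc _ ≤ s i * (V * ψ (τ (i+1))) := by gcongr; exact ψr i hi
        _ = (s i * ψ (τ (i+1))) * V := by ring
        _ ≤ K * V := by gcongr
    · rw [abs_of_nonpos g]
      refine ⟨by linarith, ?_⟩
      have g' : 0 ≤ - s i := by linarith
      calc _ ≤ -s i * (V * ψ (τ i)) := by gcongr; exact ψl i hi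
        _ = (-(s i * ψ (τ i))) * V := by ring
        _ ≤ K * V := by gcongr; linarith
  set c : ℕ → ℝ := fun i => s (i+1) - s i with hc
  have hF : ∀ i, f (τ (i+1)) = f (τ i) + s i * (τ (i+1) - τ i) := by
    intro i; rw [τstep i]; simp only [hs]; field_simp; ring
  have cpos : ∀ i < M, 0 ≤ c i := by
    intro i hi
    have := hf.slope_mono_adjacent (τI i (by omega)) (τI (i+2) (by omega))
      (y := τ (i+1)) (by linarith [τstep i]) (by linarith [τstep (i+1)])
    rw [τstep i, τstep (i+1)] at this
    simp only [hc, hs]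
    linarith
  refine ⟨M, fun i => τ (i+1), c, f (τ 0) - s 0 * τ 0, s 0, ?_, ?_, ?_⟩
  · intro i hi
    refine ⟨cpos i hi, abs_le.2 ⟨by linarith [τlo (i+1)], τhi _ (by omega)⟩⟩
  · have hL := Lfun_bd α β hα hβ hδ (τlo 0) (τI 0 (by omega)).2 (τhi M (by omega)) (τI M (by omega)).1
    have := abel_bd s (fun i => ψ (τ i)) (fun i => Lfun α β (τ i)) K1 M (sK 0 (by omega)).1
      (fun i hi => ψpos _ (τI i (by omega))) (sK M le_rfl).1 (by
        intro i hi
        have p := log_diff_bd (ψpos _ (τI i (by omega))) (ψpos _ (τI (i+1) (by omega))) (sK i (by omega)).1 (sK i (by omega)).2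
        refine p.trans ?_
        gcongr
        exact log_jacobi_bd α β hα hβ (τI i (by omega)) (τI (i+1) (by omega)) (by linarith [τstep i]))
    refine this.trans ?_
    have hl : 0 ≤ Real.log (2/δ) := Real.log_nonneg (by rw [le_div_iff₀ hδ]; linarith)
    have q1 : K1 * (Lfun α β (τ M) - Lfun α β (τ 0)) ≤ K1 * ((α+β+2) * Real.log (2/δ)) := by gcongr
    have q2 : 0 ≤ K1 * (α+β+2) := by positivity
    have q3 : 0 ≤ K1 * Real.log (2/δ) := by positivity
    nlinarith
  · intro x hx
    have ev : ∀ j ≤ M, (j = 0 ∨ τ j ≤ x) → (j = M ∨ x ≤ τ (j+1)) →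
        f (τ 0) - s 0 * τ 0 + s 0 * x + ∑ i ∈ Finset.range M, c i * max (x - τ (i+1)) 0
          = f (τ j) + s j * (x - τ j) := by
      intro j hj h1 h2
      rw [← pl_eval (fun i => f (τ i)) s τ τmono hF x M j hj h1 h2]
      simp only [hc]; ring
    have wpos := jacobi_pos α β hx
    have wle : jacobi α β x ≤ W := jacobi_le α β hα hβ ⟨hx.1.le, hx.2.le⟩
    have hfx := hb x hx
    -- generic outside estimate
    have out : ∀ y σ : ℝ, y ∈ Ioo (-1:ℝ) 1 → jacobi α β x ≤ W * jacobi α β y → |σ| * ψ y ≤ K1 →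
        |x - y| ≤ (1+y)*(1-y) → jacobi α β x * |f x - (f y + σ * (x - y))| ≤ 1 + W * (1 + K1) := by
      intro y σ hy h1 h2 h3
      rw [hψ, jacobi_succ α β hy] at h2
      have wy := jacobi_pos α β hy
      have hfy := hb y hy
      have t1 : jacobi α β x * |f y| ≤ W := by
        calc _ ≤ W * jacobi α β y * |f y| := by gcongr
          _ = W * (jacobi α β y * |f y|) := by ring
          _ ≤ W * 1 := by gcongr
          _ = W := mul_one _
      have t2 : jacobi α β x * (|σ| * |x - y|) ≤ W * K1 := by
        calc _ ≤ (W * jacobi α β y) * (|σ| * ((1+y)*(1-y))) := by gcongr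
          _ = W * (|σ| * (jacobi α β y * ((1+y)*(1-y)))) := by ring
          _ ≤ W * K1 := by gcongr
      have t3 : |f x - (f y + σ * (x - y))| ≤ |f x| + (|f y| + |σ| * |x - y|) := by
        rw [← abs_mul]
        exact (abs_sub _ _).trans (by gcongr; exact abs_add_le _ _)
      calc _ ≤ jacobi α β x * (|f x| + (|f y| + |σ| * |x - y|)) := by gcongr
        _ = jacobi α β x * |f x| + (jacobi α β x * |f y| + jacobi α β x * (|σ| * |x - y|)) := by ring
        _ ≤ 1 + (W + W * K1) := by gcongr
        _ = _ := by ring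
    split_ifs with hxd
    · rw [abs_le] at hxd
      obtain ⟨j, hj, h1, h2⟩ := pl_exists τ x M
      rw [ev j hj h1 h2]
      have g1 : τ j ≤ x := by
        rcases h1 with h1 | h1
        · rw [h1, τ0]; linarith
        · exact h1
      have g2 : x ≤ τ (j+1) := by
        rcases h2 with h2 | h2
        · rw [h2, τM]; linarith
        · exact h2
      have i1 := incS (τ j) x (τlo j) g1 hxd.2
      have i2 := sS j hj
      have g3 : x - τ j ≤ h := by linarith [τstep j]
      have g4 : 0 ≤ x - τ j := by linarith
      have : |f x - (f (τ j) + s j * (x - τ j))| ≤ 2 * S * h := by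
        rw [show f x - (f (τ j) + s j * (x - τ j)) = (f x - f (τ j)) - s j * (x - τ j) by ring]
        refine (abs_sub _ _).trans ?_
        rw [abs_mul, abs_of_nonneg g4]
        have : |s j| * (x - τ j) ≤ S * h := by gcongr
        have : S * (x - τ j) ≤ S * h := by gcongr
        linarith
      calc _ ≤ W * (2 * S * h) := by gcongr
        _ ≤ ε := hhε
    · rw [abs_le, not_and_or, not_le, not_le] at hxd
      rcases hxd with g | g
      · rw [ev 0 (by omega) (Or.inl rfl) (Or.inr (by linarith [τlo 1]))]
        refine out (τ 0) (s 0) (τI 0 (by omega)) ?_ (sK 0 (by omega)).1 ?_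
        · exact jacobi_le_right α β hα hβ hx (τI 0 (by omega)) (by rw [τ0]; linarith)
            (by rw [τ0]; linarith [hx.1])
        · rw [τ0, abs_le]
          have q := prod1
          constructor <;> linarith [hx.1]
      · have e : f (τ M) + s M * (x - τ M) = f (τ (M+1)) + s M * (x - τ (M+1)) := by
          rw [hF M]; ring
        rw [ev M le_rfl (Or.inr (by linarith [τhi M (by omega)])) (Or.inl rfl), e]
        refine out (τ (M+1)) (s M) (τI (M+1) le_rfl) ?_ (sK M le_rfl).2 ?_
        · exact jacobi_le_left α β hα hβ hx (τI (M+1) le_rfl) (by rw [τM]; linarith)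
            (by rw [τM]; linarith [hx.2])
        · rw [τM, abs_le]
          have q := prod2
          constructor <;> linarith [hx.2]


theorem LpOn_bd {g H : ℝ → ℝ} {ε K δ : ℝ} (hε : 0 ≤ ε) (hK : 0 ≤ K) (hδ : 0 ≤ δ) (hH : Integrable H)
    (hH0 : ∀ x, 0 ≤ H x)
    (hg : ∀ x ∈ Ioo (-1:ℝ) 1, |g x| ≤ (if |x| ≤ 1 - δ then ε else K) + H x) :
    LpOn g 1 (-1) 1 ≤ ENNReal.ofReal (2 * ε + 2 * δ * K + ∫ x, H x) := by
  unfold LpOn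
  rw [eLpNorm_one_eq_lintegral_enorm, ← Measure.restrict_congr_set Ioo_ae_eq_Icc]
  set A : Set ℝ := Icc (-1) (-1+δ) ∪ Icc (1-δ) 1 with hA
  have hAm : MeasurableSet A := measurableSet_Icc.union measurableSet_Icc
  have h1 : ∫⁻ x in Ioo (-1:ℝ) 1, ‖g x‖ₑ ≤ ∫⁻ x in Ioo (-1:ℝ) 1,
      (ENNReal.ofReal ε + (A.indicator (fun _ => ENNReal.ofReal K) x + ENNReal.ofReal (H x))) := by
    refine setLIntegral_mono' measurableSet_Ioo fun x hx => ?_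
    have := hg x hx
    rw [← ofReal_norm, Real.norm_eq_abs]
    refine (ENNReal.ofReal_le_ofReal this).trans ?_
    rw [ENNReal.ofReal_add (by split_ifs <;> assumption) (hH0 x), ← add_assoc]
    gcongr
    split_ifs with h
    · exact le_self_add
    · have : x ∈ A := by
        rw [abs_le, not_and_or, not_le, not_le] at h
        rcases h with h | h
        · left; exact ⟨hx.1.le, by linarith⟩
        · right; exact ⟨by linarith, hx.2.le⟩
      rw [indicator_of_mem this]
      exact le_add_self
  refine h1.trans ?_
  rw [lintegral_add_left measurable_const, lintegral_add_left (measurable_const.indicator hAm)]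
  have hI : 0 ≤ ∫ x, H x := integral_nonneg hH0
  rw [ENNReal.ofReal_add (by positivity) hI, ENNReal.ofReal_add (by positivity) (by positivity), add_assoc]
  gcongr
  · rw [setLIntegral_const, Real.volume_Ioo, ← ENNReal.ofReal_mul hε]
    apply ENNReal.ofReal_le_ofReal; linarith
  · refine (setLIntegral_le_lintegral _ _).trans ?_
    rw [lintegral_indicator_const hAm]
    have : volume A ≤ ENNReal.ofReal (2*δ) := by
      refine (measure_union_le _ _).trans ?_
      rw [Real.volume_Icc, Real.volume_Icc, ← ENNReal.ofReal_add (by linarith) (by linarith)]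
      apply ENNReal.ofReal_le_ofReal; linarith
    rw [mul_comm, ENNReal.ofReal_mul (by positivity)]
    gcongr
  · refine (setLIntegral_le_lintegral _ _).trans ?_
    rw [ofReal_integral_eq_lintegral_ofReal hH (ae_of_all _ hH0)]

theorem upper_aux (α β : ℝ) (hα : 0 ≤ α) (hβ : 0 ≤ β) :
    ∃ A > 0, ∃ r : ℕ, 2 ≤ r ∧ ∀ f : ℝ → ℝ, ConvexOn ℝ (Ioo (-1:ℝ) 1) f →
      (∀ x ∈ Ioo (-1:ℝ) 1, jacobi α β x * |f x| ≤ 1) → ∀ N : ℕ, 12 ≤ N →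
      ∃ P : Polynomial ℝ, P.natDegree ≤ 2*r*(N-1)+3 ∧
        LpOn (fun x => jacobi α β x * (f x - P.eval x)) 1 (-1) 1 ≤
          ENNReal.ofReal (A / (N:ℝ)^2 * (1 + Real.log N)) := by
  obtain ⟨C, hC, r, hr, hT⟩ := trunc_weighted α β hα hβ
  obtain ⟨K2, hK2, K3, hK3, hG⟩ := grid_lemma α β hα hβ
  refine ⟨2 + 128 * K3 + 2 * C * Real.pi * K2, by positivity, r, hr, ?_⟩
  intro f hf hb N hN
  have hNr : (12:ℝ) ≤ N := by exact_mod_cast hN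
  have hN0 : (0:ℝ) < N := by linarith
  set δ : ℝ := 64 / (N:ℝ)^2 with hδ
  have hδ0 : 0 < δ := by positivity
  have hδ2 : δ ≤ 1/2 := by
    rw [hδ, div_le_iff₀ (by positivity)]; nlinarith
  obtain ⟨M, t, c, a, b, hct, hsum, happ⟩ := hG f hf hb δ hδ0 hδ2 (1/(N:ℝ)^2) (by positivity)
  have hP : ∀ i : ℕ, ∃ P : Polynomial ℝ, i < M → (P.natDegree ≤ 2*r*(N-1)+3 ∧ ∀ x ∈ Icc (-1:ℝ) 1,
      jacobi α β x * |max (x-t i) 0 - P.eval x| ≤ C * jacobi α β (t i) * (√(1-(t i)^2)/N) * (1+((x-t i)/(√(1-(t i)^2)/N))^2)⁻¹) := by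
    intro i
    by_cases hi : i < M
    · obtain ⟨P, h1, h2⟩ := hT N (by omega) (t i) (by have := (hct i hi).2; linarith)
      exact ⟨P, fun _ => ⟨h1, h2⟩⟩
    · exact ⟨0, fun h => absurd h hi⟩
  choose P hP using hP
  have htI : ∀ i < M, t i ∈ Ioo (-1:ℝ) 1 := by
    intro i hi
    have := abs_le.1 (hct i hi).2
    exact ⟨by linarith, by linarith⟩
  set ρ : ℕ → ℝ := fun i => √(1-(t i)^2)/N with hρ
  have hρpos : ∀ i < M, 0 < ρ i := by
    intro i hi
    have := htI i hi
    exact div_pos (Real.sqrt_pos.2 (by nlinarith [this.1, this.2])) hN0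
  set Hi : ℕ → ℝ → ℝ := fun i x => c i * (C * jacobi α β (t i) * ρ i) * (1+((x-t i)/ρ i)^2)⁻¹ with hHi
  have hHint : ∀ i ∈ Finset.range M, Integrable (Hi i) := by
    intro i hi
    exact (lor_integrable (t i) (hρpos i (Finset.mem_range.1 hi))).const_mul _
  refine ⟨Polynomial.C a + Polynomial.C b * Polynomial.X + ∑ i ∈ Finset.range M, Polynomial.C (c i) * P i, ?_, ?_⟩
  · refine (Polynomial.natDegree_add_le _ _).trans (max_le ?_ ?_)
    · refine (Polynomial.natDegree_add_le _ _).trans (max_le (by simp) ?_)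
      exact (Polynomial.natDegree_C_mul_le _ _).trans (Polynomial.natDegree_X_le.trans (by omega))
    · refine Polynomial.natDegree_sum_le_of_forall_le _ _ fun i hi => ?_
      exact (Polynomial.natDegree_C_mul_le _ _).trans (hP i (Finset.mem_range.1 hi)).1
  · refine (LpOn_bd (H := fun x => ∑ i ∈ Finset.range M, |Hi i x|) (ε := 1/(N:ℝ)^2) (K := K3) (δ := δ) (by positivity) hK3.le hδ0.le
      (integrable_finsetSum _ fun i hi => (hHint i hi).abs)
      (fun x => Finset.sum_nonneg fun i _ => abs_nonneg _) ?_).trans ?_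
    · intro x hx
      have wpos := jacobi_pos α β hx
      rw [abs_mul, abs_of_pos wpos]
      have e : f x - (Polynomial.C a + Polynomial.C b * Polynomial.X + ∑ i ∈ Finset.range M, Polynomial.C (c i) * P i).eval x
          = (f x - (a + b * x + ∑ i ∈ Finset.range M, c i * max (x - t i) 0)) +
            ∑ i ∈ Finset.range M, c i * (max (x - t i) 0 - (P i).eval x) := by
        simp only [Polynomial.eval_add, Polynomial.eval_mul, Polynomial.eval_C, Polynomial.eval_X,
          Polynomial.eval_finsetSum, mul_sub, Finset.sum_sub_distrib]
        ring
      rw [e]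
      calc _ ≤ jacobi α β x * (|f x - (a + b * x + ∑ i ∈ Finset.range M, c i * max (x - t i) 0)| +
            ∑ i ∈ Finset.range M, |c i * (max (x - t i) 0 - (P i).eval x)|) := by
              gcongr
              exact (abs_add_le _ _).trans (by gcongr; exact Finset.abs_sum_le_sum_abs _ _)
        _ = jacobi α β x * |f x - (a + b * x + ∑ i ∈ Finset.range M, c i * max (x - t i) 0)| +
            ∑ i ∈ Finset.range M, jacobi α β x * |c i * (max (x - t i) 0 - (P i).eval x)| := by
              rw [mul_add, Finset.mul_sum]
        _ ≤ _ := by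
              gcongr with i hi
              · exact happ x hx
              · have hi' := Finset.mem_range.1 hi
                refine le_trans ?_ (le_abs_self _)
                have h2 := (hP i hi').2 x ⟨hx.1.le, hx.2.le⟩
                rw [abs_mul, abs_of_nonneg (hct i hi').1]
                calc _ = c i * (jacobi α β x * |max (x - t i) 0 - (P i).eval x|) := by ring
                  _ ≤ c i * _ := mul_le_mul_of_nonneg_left h2 (hct i hi').1
                  _ = _ := by simp only [hHi, hρ]; ring
    · apply ENNReal.ofReal_le_ofReal
      rw [integral_finsetSum _ (fun i hi => (hHint i hi).abs)]
      have hint : ∀ i ∈ Finset.range M, ∫ x, |Hi i x| = C * Real.pi / (N:ℝ)^2 * (c i * jacobi (α+1) (β+1) (t i)) := by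
        intro i hi
        have hi' := Finset.mem_range.1 hi
        have hpos := hρpos i hi'
        have w0 := jacobi_pos α β (htI i hi')
        have c0 := (hct i hi').1
        have : ∀ x, |Hi i x| = Hi i x := fun x => abs_of_nonneg (by simp only [hHi]; positivity)
        simp only [this]
        simp only [hHi]
        rw [integral_const_mul, lor_integral _ hpos, jacobi_succ α β (htI i hi')]
        have hsq : ρ i * ρ i = (1 + t i) * (1 - t i) / (N:ℝ)^2 := by
          have h1 := htI i hi'
          simp only [hρ]
          rw [div_mul_div_comm, Real.mul_self_sqrt (by nlinarith [h1.1, h1.2])]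
          ring_nf
        calc _ = c i * C * jacobi α β (t i) * (ρ i * ρ i) * Real.pi := by ring
          _ = _ := by rw [hsq]; ring
      rw [Finset.sum_congr rfl hint, ← Finset.mul_sum]
      have hlog : Real.log (2/δ) ≤ 2 * Real.log N := by
        rw [show 2 * Real.log N = Real.log ((N:ℝ)^2) by rw [Real.log_pow]; norm_num]
        apply Real.log_le_log (by positivity)
        rw [hδ, div_div_eq_mul_div]
        rw [div_le_iff₀ (by norm_num)]; nlinarith
      have hl0 : 0 ≤ Real.log N := Real.log_nonneg (by linarith)
      have s1 : C * Real.pi / (N:ℝ)^2 * ∑ i ∈ Finset.range M, c i * jacobi (α+1) (β+1) (t i) ≤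
          C * Real.pi / (N:ℝ)^2 * (K2 * (1 + 2 * Real.log N)) := by
        have hpi := Real.pi_pos
        gcongr
        exact hsum.trans (by gcongr)
      have s2 : 2 * (1/(N:ℝ)^2) + 2 * δ * K3 + C * Real.pi / (N:ℝ)^2 * (K2 * (1 + 2 * Real.log N))
          = (2 + 128 * K3 + C * Real.pi * K2 * (1 + 2 * Real.log N)) / (N:ℝ)^2 := by
        rw [hδ]; field_simp; ring
      refine (add_le_add le_rfl s1).trans ?_
      rw [s2, div_mul_eq_mul_div]
      gcongr
      have : 0 ≤ C * Real.pi * K2 := by positivity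
      have : 0 ≤ (2 + 128 * K3) * Real.log N := by positivity
      nlinarith

theorem upper_bound (α β : ℝ) (hα : 0 ≤ α) (hβ : 0 ≤ β) :
    ∃ c₂ > 0, ∀ n : ℕ, 1 ≤ n → EClass (MSet 2 ∩ BSet ∞ α β) n (jacobi α β) 1 ≤
      ENNReal.ofReal (c₂ * (n:ℝ)^(-2:ℝ) * Real.log ((n:ℝ)+1)) := by
  obtain ⟨A, hA, r, hr, hU⟩ := upper_aux α β hα hβ
  refine ⟨48 * r^2 * A + 4 * (24 * r)^2, by positivity, ?_⟩
  intro n hn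
  unfold EClass
  refine iSup₂_le fun f hf => ?_
  have hc := conv_of_kmono hf.1
  have hb := bd_of_B hα hβ hc hf.2
  have hr0 : (2:ℝ) ≤ r := by exact_mod_cast hr
  have hn0 : (1:ℝ) ≤ n := by exact_mod_cast hn
  have hlog : 1/2 ≤ Real.log ((n:ℝ)+1) := by
    have := Real.log_two_gt_d9
    have : Real.log 2 ≤ Real.log ((n:ℝ)+1) := Real.log_le_log (by norm_num) (by linarith)
    linarith
  have hpow : (n:ℝ)^(-2:ℝ) = 1 / (n:ℝ)^2 := by
    rw [Real.rpow_neg (by linarith)]; norm_num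
  unfold En
  by_cases hbig : 24 * r ≤ n
  · set N := n / (2*r) with hN
    have hN12 : 12 ≤ N := by
      rw [hN, Nat.le_div_iff_mul_le (by omega)]; omega
    have h1 : 2*r*N ≤ n := Nat.mul_div_le n (2*r)
    have h2 : n < 2*r*(N+1) := Nat.lt_mul_div_succ n (by omega)
    obtain ⟨P, hP1, hP2⟩ := hU f hc hb N hN12
    have hdeg : P.natDegree ≤ n := by
      refine hP1.trans (le_trans ?_ h1)
      obtain ⟨k, hk⟩ : ∃ k, N = k + 1 := ⟨N-1, by omega⟩
      rw [hk, Nat.add_sub_cancel, mul_add]; omega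
    refine (iInf₂_le P hdeg).trans (hP2.trans (ENNReal.ofReal_le_ofReal ?_))
    have hNr : (12:ℝ) ≤ N := by exact_mod_cast hN12
    have h2r : (n:ℝ) < 2*r*(N+1) := by exact_mod_cast h2
    have h3 : (n:ℝ) ≤ 4*r*N := by nlinarith
    have h1r : 2*(r:ℝ)*N ≤ n := by exact_mod_cast h1
    have hNn : (N:ℝ) ≤ n + 1 := by nlinarith
    have hl : Real.log N ≤ Real.log ((n:ℝ)+1) := Real.log_le_log (by linarith) hNn
    have h4 : 1 / (N:ℝ)^2 ≤ 16 * r^2 * (1/(n:ℝ)^2) := by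
      rw [mul_one_div, div_le_div_iff₀ (by positivity) (by positivity)]
      have : (n:ℝ)^2 ≤ (4*r*N)^2 := by gcongr
      linarith
    rw [hpow]
    calc A / (N:ℝ)^2 * (1 + Real.log N) = A * (1/(N:ℝ)^2) * (1 + Real.log N) := by ring
      _ ≤ A * (16 * r^2 * (1/(n:ℝ)^2)) * (3 * Real.log ((n:ℝ)+1)) := by
          have : 0 ≤ Real.log N := Real.log_nonneg (by linarith)
          gcongr
          linarith
      _ = 48 * r^2 * A * (1/(n:ℝ)^2) * Real.log ((n:ℝ)+1) := by ring
      _ ≤ _ := by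
          gcongr
          have : 0 ≤ 4 * (24 * (r:ℝ))^2 := by positivity
          linarith
  · refine (iInf₂_le (0 : Polynomial ℝ) (by simp)).trans ?_
    refine (LpOn_bd (H := fun _ => 0) (ε := 1) (K := 0) (δ := 0) (by norm_num) le_rfl le_rfl (integrable_zero _ _ _) (fun _ => le_rfl) ?_).trans ?_
    · intro x hx
      have h0 : |x| ≤ 1 - 0 := by rw [abs_le]; constructor <;> linarith [hx.1, hx.2]
      rw [if_pos h0, Polynomial.eval_zero, sub_zero, abs_mul, abs_of_pos (jacobi_pos α β hx), add_zero]
      exact hb x hx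
    · apply ENNReal.ofReal_le_ofReal
      have hlt : (n:ℝ) ≤ 24 * r := by
        have : n ≤ 24 * r := by omega
        exact_mod_cast this
      have h5 : 1 ≤ (24 * (r:ℝ))^2 * (1/(n:ℝ)^2) := by
        rw [mul_one_div, one_le_div (by positivity)]; gcongr
      rw [hpow, integral_zero]
      have h6 : 4 * ((24 * (r:ℝ))^2 * (1/(n:ℝ)^2)) * Real.log ((n:ℝ)+1) ≤ (48 * r^2 * A + 4 * (24 * r)^2) * (1/(n:ℝ)^2) * Real.log ((n:ℝ)+1) := by
        rw [← mul_assoc]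
        gcongr
        have : 0 ≤ 48 * (r:ℝ)^2 * A := by positivity
        linarith
      refine le_trans ?_ h6
      nlinarith


theorem cos_pow_cos_orth : ∀ (k : ℕ) (m : ℤ), (k:ℤ) < m → ∫ θ in (0:ℝ)..Real.pi, Real.cos θ ^ k * Real.cos (m * θ) = 0 := by
  intro k
  induction k with
  | zero =>
    intro m hm
    have hm0 : (m:ℝ) ≠ 0 := by
      have : m ≠ 0 := by push_cast at hm; omega
      exact_mod_cast this
    simp only [pow_zero, one_mul]
    rw [intervalIntegral.integral_comp_mul_left (fun x => Real.cos x) hm0, integral_cos]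
    simp [Real.sin_int_mul_pi]
  | succ k ih =>
    intro m hm
    push_cast at hm
    have e : ∀ θ : ℝ, Real.cos θ ^ (k+1) * Real.cos (m * θ) =
        (1/2) * (Real.cos θ ^ k * Real.cos (((m+1 : ℤ):ℝ) * θ)) + (1/2) * (Real.cos θ ^ k * Real.cos (((m-1 : ℤ):ℝ) * θ)) := by
      intro θ
      push_cast
      rw [add_mul, sub_mul, one_mul, Real.cos_add, Real.cos_sub]; ring
    simp only [e]
    rw [intervalIntegral.integral_add (by apply Continuous.intervalIntegrable; fun_prop) (by apply Continuous.intervalIntegrable; fun_prop),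
      intervalIntegral.integral_const_mul, intervalIntegral.integral_const_mul, ih _ (by omega), ih _ (by omega)]
    simp

theorem poly_orth (p : Polynomial ℝ) (N : ℕ) (hN : p.natDegree + 2 ≤ N) :
    ∫ θ in (0:ℝ)..Real.pi, p.eval (Real.cos θ) * (Real.sin θ * Real.sin (N * θ)) = 0 := by
  have e : ∀ θ : ℝ, p.eval (Real.cos θ) * (Real.sin θ * Real.sin (N * θ)) =
      ∑ k ∈ Finset.range (p.natDegree + 1), (p.coeff k / 2 * (Real.cos θ ^ k * Real.cos (((N - 1 : ℤ) : ℝ) * θ)) -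
        p.coeff k / 2 * (Real.cos θ ^ k * Real.cos (((N + 1 : ℤ) : ℝ) * θ))) := by
    intro θ
    rw [Polynomial.eval_eq_sum_range, Finset.sum_mul]
    refine Finset.sum_congr rfl fun k _ => ?_
    push_cast
    rw [add_mul, sub_mul, one_mul, Real.cos_add, Real.cos_sub]; ring
  simp only [e]
  rw [intervalIntegral.integral_finsetSum (fun k _ => by apply Continuous.intervalIntegrable; fun_prop)]
  refine Finset.sum_eq_zero fun k hk => ?_
  rw [Finset.mem_range] at hk
  rw [intervalIntegral.integral_sub (by apply Continuous.intervalIntegrable; fun_prop) (by apply Continuous.intervalIntegrable; fun_prop),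
      intervalIntegral.integral_const_mul, intervalIntegral.integral_const_mul, cos_pow_cos_orth _ _ (by omega), cos_pow_cos_orth _ _ (by omega)]
  simp


theorem int_css (N : ℕ) (hN : 3 ≤ N) (a b : ℝ) :
    ∫ θ in a..b, Real.cos θ * (Real.sin θ * Real.sin (N * θ)) =
      (1/4) * ((Real.sin ((N-2)*b) - Real.sin ((N-2)*a))/(N-2) - (Real.sin ((N+2)*b) - Real.sin ((N+2)*a))/(N+2)) := by
  have hN' : (3:ℝ) ≤ N := by exact_mod_cast hN
  have n1 : (N:ℝ) - 2 ≠ 0 := by linarith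
  have n2 : (N:ℝ) + 2 ≠ 0 := by linarith
  have e : ∀ θ : ℝ, Real.cos θ * (Real.sin θ * Real.sin (N * θ)) =
      (1/4) * (Real.cos ((N-2)*θ) - Real.cos ((N+2)*θ)) := by
    intro θ
    rw [add_mul, sub_mul, Real.cos_add, Real.cos_sub, Real.sin_two_mul]; ring
  simp only [e]
  rw [intervalIntegral.integral_const_mul, intervalIntegral.integral_sub (by apply Continuous.intervalIntegrable; fun_prop) (by apply Continuous.intervalIntegrable; fun_prop),
    intervalIntegral.integral_comp_mul_left (fun x => Real.cos x) n1, intervalIntegral.integral_comp_mul_left (fun x => Real.cos x) n2,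
    integral_cos, integral_cos, smul_eq_mul, smul_eq_mul]
  congr 1
  rw [inv_mul_eq_div, inv_mul_eq_div]

theorem int_abs (k : ℕ) (hk : 1 ≤ k) :
    |∫ θ in (0:ℝ)..Real.pi, |Real.cos θ| * (Real.sin θ * Real.sin ((2*k+1 : ℕ) * θ))| = 2 / (((2*k+1 : ℕ):ℝ)^2 - 4) := by
  have hpi := Real.pi_pos
  have ii : ∀ a b : ℝ, IntervalIntegrable (fun θ => |Real.cos θ| * (Real.sin θ * Real.sin ((2*k+1 : ℕ) * θ))) volume a b := by
    intro a b; apply Continuous.intervalIntegrable; fun_prop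
  rw [← intervalIntegral.integral_add_adjacent_intervals (ii 0 (Real.pi/2)) (ii (Real.pi/2) Real.pi)]
  have e1 : ∫ θ in (0:ℝ)..Real.pi/2, |Real.cos θ| * (Real.sin θ * Real.sin ((2*k+1 : ℕ) * θ)) =
      ∫ θ in (0:ℝ)..Real.pi/2, Real.cos θ * (Real.sin θ * Real.sin ((2*k+1 : ℕ) * θ)) := by
    apply intervalIntegral.integral_congr
    intro θ hθ
    rw [uIcc_of_le (by linarith)] at hθ
    dsimp only
    rw [abs_of_nonneg (Real.cos_nonneg_of_mem_Icc ⟨by linarith [hθ.1], hθ.2⟩)]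
  have e2 : ∫ θ in (Real.pi/2)..Real.pi, |Real.cos θ| * (Real.sin θ * Real.sin ((2*k+1 : ℕ) * θ)) =
      -∫ θ in (Real.pi/2)..Real.pi, Real.cos θ * (Real.sin θ * Real.sin ((2*k+1 : ℕ) * θ)) := by
    rw [← intervalIntegral.integral_neg]
    apply intervalIntegral.integral_congr
    intro θ hθ
    rw [uIcc_of_le (by linarith)] at hθ
    dsimp only
    rw [abs_of_nonpos (Real.cos_nonpos_of_pi_div_two_le_of_le hθ.1 (by linarith [hθ.2]))]
    ring
  rw [e1, e2, int_css _ (by omega), int_css _ (by omega)]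
  have hk' : (1:ℝ) ≤ k := by exact_mod_cast hk
  have s1 : Real.sin ((((2*k+1 : ℕ):ℝ) - 2) * (Real.pi/2)) = -Real.cos (k * Real.pi) := by
    rw [← Real.sin_sub_pi_div_two]; congr 1; push_cast; ring
  have s2 : Real.sin ((((2*k+1 : ℕ):ℝ) + 2) * (Real.pi/2)) = -Real.cos (k * Real.pi) := by
    rw [← Real.sin_add_pi_div_two, ← Real.sin_add_pi]; congr 1; push_cast; ring
  have s3 : Real.sin ((((2*k+1 : ℕ):ℝ) - 2) * Real.pi) = 0 := by
    rw [show (((2*k+1 : ℕ):ℝ) - 2) * Real.pi = ((2*k-1 : ℤ) : ℝ) * Real.pi by push_cast; ring]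
    exact Real.sin_int_mul_pi _
  have s4 : Real.sin ((((2*k+1 : ℕ):ℝ) + 2) * Real.pi) = 0 := by
    rw [show (((2*k+1 : ℕ):ℝ) + 2) * Real.pi = ((2*k+3 : ℤ) : ℝ) * Real.pi by push_cast; ring]
    exact Real.sin_int_mul_pi _
  rw [s1, s2, s3, s4, mul_zero, mul_zero, Real.sin_zero]
  have hN : (3:ℝ) ≤ ((2*k+1 : ℕ):ℝ) := by push_cast; linarith
  set N : ℝ := ((2*k+1 : ℕ):ℝ)
  have n1 : N - 2 ≠ 0 := by linarith
  have n2 : N + 2 ≠ 0 := by linarith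
  have n3 : 0 < N^2 - 4 := by nlinarith
  have hc : |Real.cos (k * Real.pi)| = 1 := Real.abs_cos_int_mul_pi k
  have : (1 / 4 * ((-Real.cos (k * Real.pi) - 0) / (N - 2) - (-Real.cos (k * Real.pi) - 0) / (N + 2)) +
      -(1 / 4 * ((0 - -Real.cos (k * Real.pi)) / (N - 2) - (0 - -Real.cos (k * Real.pi)) / (N + 2)))) =
      -(2/(N^2-4)) * Real.cos (k * Real.pi) := by
    rw [show N^2-4 = (N-2)*(N+2) by ring]
    field_simp
    ring
  rw [this, abs_mul, hc, mul_one, abs_neg, abs_of_pos (by positivity)]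

theorem int_cos_sub (g : ℝ → ℝ) (hg : Continuous g) :
    ∫ θ in (0:ℝ)..Real.pi, g (Real.cos θ) * Real.sin θ = ∫ y in (-1:ℝ)..1, g y := by
  have := intervalIntegral.integral_comp_mul_deriv (f := Real.cos) (f' := fun θ => -Real.sin θ) (g := g) (a := 0) (b := Real.pi)
    (fun x _ => Real.hasDerivAt_cos x) (by fun_prop) hg
  simp only [Function.comp, Real.cos_zero, Real.cos_pi, mul_neg] at this
  rw [intervalIntegral.integral_neg, intervalIntegral.integral_symm (-1) 1] at this
  linarith

theorem abs_low (p : Polynomial ℝ) (n : ℕ) (hn : 1 ≤ n) (hp : p.natDegree ≤ n) :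
    1 / (8 * (n:ℝ)^2) ≤ ∫ y in (-1:ℝ)..1, |(|y| - p.eval y)| := by
  obtain ⟨k, hk1, hk2⟩ : ∃ k : ℕ, n + 2 ≤ 2*k+1 ∧ 2*k+1 ≤ n + 3 := ⟨(n+2)/2, by omega, by omega⟩
  have h1 := int_abs k (by omega)
  have h2 := poly_orth p (2*k+1) (by omega)
  have hpc : Continuous fun y => p.eval y := p.continuous
  have hpc2 : Continuous fun θ => p.eval (Real.cos θ) := hpc.comp Real.continuous_cos
  have h0 : ∀ u v : ℝ, v = 0 → u = u - v := fun u v h => by rw [h, sub_zero]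
  rw [h0 (∫ θ in (0:ℝ)..Real.pi, |Real.cos θ| * (Real.sin θ * Real.sin ((2*k+1 : ℕ) * θ))) _ h2, ← intervalIntegral.integral_sub (by apply Continuous.intervalIntegrable; fun_prop) (by apply Continuous.intervalIntegrable; fun_prop)] at h1
  have h3 : |∫ θ in (0:ℝ)..Real.pi, (|Real.cos θ| * (Real.sin θ * Real.sin ((2*k+1 : ℕ) * θ)) -
      p.eval (Real.cos θ) * (Real.sin θ * Real.sin ((2*k+1 : ℕ) * θ)))| ≤
      ∫ θ in (0:ℝ)..Real.pi, |(|Real.cos θ| - p.eval (Real.cos θ))| * Real.sin θ := by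
    refine (intervalIntegral.abs_integral_le_integral_abs Real.pi_pos.le).trans ?_
    apply intervalIntegral.integral_mono_on Real.pi_pos.le (by apply Continuous.intervalIntegrable; fun_prop) (by apply Continuous.intervalIntegrable; fun_prop)
    intro θ hθ
    have hs : 0 ≤ Real.sin θ := Real.sin_nonneg_of_mem_Icc hθ
    rw [← sub_mul, abs_mul, abs_mul, abs_of_nonneg hs]
    gcongr
    exact mul_le_of_le_one_right hs (Real.abs_sin_le_one _)
  rw [h1, int_cos_sub (fun y => |(|y| - p.eval y)|) (by fun_prop)] at h3
  refine le_trans ?_ h3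
  have hn' : (1:ℝ) ≤ n := by exact_mod_cast hn
  have a1 : (n:ℝ) + 2 ≤ ((2*k+1 : ℕ):ℝ) := by exact_mod_cast hk1
  have a2 : ((2*k+1 : ℕ):ℝ) ≤ n + 3 := by exact_mod_cast hk2
  rw [div_le_div_iff₀ (by positivity) (by nlinarith)]
  nlinarith

theorem abs_low' (P : Polynomial ℝ) (n : ℕ) (hn : 1 ≤ n) (hP : P.natDegree ≤ n) (M : ℝ) (hM : 0 < M) :
    1 / (32 * M * (n:ℝ)^2) ≤ ∫ x in (-(1/2):ℝ)..(1/2), |(M⁻¹ * |x| - P.eval x)| := by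
  set q : Polynomial ℝ := Polynomial.C (2*M) * P.comp (Polynomial.C (1/2) * Polynomial.X) with hq
  have hdeg : q.natDegree ≤ n := by
    refine (Polynomial.natDegree_C_mul_le _ _).trans ?_
    refine Polynomial.natDegree_comp_le.trans ?_
    have : (Polynomial.C (1/2:ℝ) * Polynomial.X).natDegree ≤ 1 :=
      (Polynomial.natDegree_C_mul_le _ _).trans Polynomial.natDegree_X_le
    calc _ ≤ P.natDegree * 1 := by gcongr
      _ ≤ n := by omega
  have h := abs_low q n hn hdeg
  have e : ∀ y : ℝ, |(|y| - q.eval y)| = 2 * M * |(M⁻¹ * |(1/2) * y| - P.eval ((1/2) * y))| := by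
    intro y
    rw [hq, ← abs_of_pos (by positivity : 0 < 2 * M), ← abs_mul, abs_of_pos (by positivity : 0 < 2 * M)]
    congr 1
    simp only [Polynomial.eval_mul, Polynomial.eval_C, Polynomial.eval_comp, Polynomial.eval_X]
    rw [abs_mul, abs_of_pos (by norm_num : (0:ℝ) < 1/2)]
    field_simp
  simp only [e] at h
  rw [intervalIntegral.integral_const_mul, intervalIntegral.integral_comp_mul_left (fun x => |(M⁻¹ * |x| - P.eval x)|) (by norm_num), smul_eq_mul] at h
  norm_num at h
  have hn' : (1:ℝ) ≤ n := by exact_mod_cast hn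
  have e2 : 1 / (32 * M * (n:ℝ)^2) = 1 / (8 * (n:ℝ)^2) / (4 * M) := by field_simp; norm_num
  rw [e2, div_le_iff₀ (by positivity)]
  norm_num
  linarith


theorem lower_bound (α β : ℝ) (hα : 0 ≤ α) (hβ : 0 ≤ β) :
    ∃ c₁ > 0, ∀ n : ℕ, 1 ≤ n → ENNReal.ofReal (c₁ * (n:ℝ)^(-2:ℝ)) ≤
      EClass (MSet 2 ∩ BSet ∞ α β) n (jacobi α β) 1 := by
  set m : ℝ≥0∞ := LpOn (fun x => jacobi α β x * |x|) ∞ (-1) 1 with hm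
  have hwc := jacobi_cont α β hα hβ
  have hmtop : m ≠ ⊤ := by
    rw [hm]; unfold LpOn
    rw [eLpNorm_exponent_top]
    refine ne_top_of_le_ne_top (b := ENNReal.ofReal (2^(α+β))) ENNReal.ofReal_ne_top ?_
    refine eLpNormEssSup_le_of_ae_bound ?_
    filter_upwards [ae_restrict_mem measurableSet_Icc] with x hx
    have h1 := jacobi_le α β hα hβ hx
    have h0 : 0 ≤ jacobi α β x := mul_nonneg (Real.rpow_nonneg (by linarith [hx.1]) _) (Real.rpow_nonneg (by linarith [hx.2]) _)
    have h2 : |x| ≤ 1 := abs_le.2 hx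
    rw [Real.norm_eq_abs, abs_of_nonneg (by positivity)]
    calc _ ≤ jacobi α β x * 1 := by gcongr
      _ ≤ _ := by linarith
  have hm0 : m ≠ 0 := by
    intro h
    rw [hm] at h; unfold LpOn at h
    have hc2 : Continuous (fun x => jacobi α β x * |x|) := hwc.mul continuous_abs
    rw [eLpNorm_eq_zero_iff hc2.aestronglyMeasurable (by simp)] at h
    have h3 : ∀ᵐ x ∂(volume.restrict (Ioo (0:ℝ) 1)), jacobi α β x * |x| = 0 :=
      ae_restrict_of_ae_restrict_of_subset (show Ioo (0:ℝ) 1 ⊆ Icc (-1:ℝ) 1 from fun x hx => ⟨by linarith [hx.1], hx.2.le⟩) h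
    rw [ae_restrict_iff' measurableSet_Ioo] at h3
    have h4 : volume (Ioo (0:ℝ) 1) = 0 := by
      refine measure_mono_null ?_ (ae_iff.1 h3)
      intro x hx
      simp only [mem_ofPred_eq, Classical.not_imp]
      refine ⟨hx, (mul_pos (jacobi_pos α β ⟨by linarith [hx.1], hx.2⟩) (abs_pos.2 hx.1.ne')).ne'⟩
    rw [Real.volume_Ioo] at h4
    norm_num at h4
  set M : ℝ := m.toReal with hM
  have hMpos : 0 < M := ENNReal.toReal_pos hm0 hmtop
  set f : ℝ → ℝ := fun x => M⁻¹ * |x| with hf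
  have hfM : f ∈ MSet 2 := by
    apply kmono_of_conv
    have h1 : ConvexOn ℝ (Ioo (-1:ℝ) 1) (fun x : ℝ => ‖x‖) := convexOn_norm (convex_Ioo _ _)
    exact h1.smul (by positivity : 0 ≤ M⁻¹)
  have hfB : f ∈ BSet ∞ α β := by
    refine ⟨by fun_prop, ?_⟩
    have e : (fun x => jacobi α β x * f x) = M⁻¹ • (fun x => jacobi α β x * |x|) := by
      ext x; simp only [hf, Pi.smul_apply, smul_eq_mul]; ring
    unfold LpOn
    rw [e, eLpNorm_const_smul]
    change ‖M⁻¹‖ₑ * m = 1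
    rw [← ofReal_norm, Real.norm_eq_abs, abs_of_pos (by positivity), ENNReal.ofReal_inv_of_pos hMpos, hM,
      ENNReal.ofReal_toReal hmtop, ENNReal.inv_mul_cancel hm0 hmtop]
  set κ : ℝ := (1/2)^α * (1/2)^β with hκ
  have hκ0 : 0 < κ := by positivity
  refine ⟨κ / (32 * M), by positivity, ?_⟩
  intro n hn
  have hn0 : (1:ℝ) ≤ n := by exact_mod_cast hn
  have hpow : (n:ℝ)^(-2:ℝ) = 1 / (n:ℝ)^2 := by
    rw [Real.rpow_neg (by linarith)]; norm_num
  unfold EClass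
  refine le_trans ?_ (le_iSup₂ (f := fun f _ => En n f (jacobi α β) 1) f ⟨hfM, hfB⟩)
  unfold En
  refine le_iInf₂ fun P hP => ?_
  unfold LpOn
  rw [eLpNorm_one_eq_lintegral_enorm]
  have hlow := abs_low' P n hn hP M hMpos
  have hPc : Continuous fun y => P.eval y := P.continuous
  have hgc : Continuous fun x => κ * |M⁻¹ * |x| - P.eval x| := by fun_prop
  calc _ ≤ ENNReal.ofReal (∫ x in (-(1/2):ℝ)..(1/2), κ * |(M⁻¹ * |x| - P.eval x)|) := by
        apply ENNReal.ofReal_le_ofReal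
        rw [intervalIntegral.integral_const_mul, hpow]
        calc _ = κ * (1 / (32 * M * (n:ℝ)^2)) := by field_simp
          _ ≤ _ := by gcongr
    _ = ∫⁻ x in Ioc (-(1/2):ℝ) (1/2), ENNReal.ofReal (κ * |(M⁻¹ * |x| - P.eval x)|) := by
        rw [intervalIntegral.integral_of_le (by norm_num),
          ofReal_integral_eq_lintegral_ofReal (hgc.integrableOn_Ioc) (ae_of_all _ fun x => by positivity)]
    _ ≤ ∫⁻ x in Ioc (-(1/2):ℝ) (1/2), ‖jacobi α β x * (f x - P.eval x)‖ₑ := by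
        refine setLIntegral_mono' measurableSet_Ioc fun x hx => ?_
        have hxI : x ∈ Ioo (-1:ℝ) 1 := ⟨by linarith [hx.1], by linarith [hx.2]⟩
        rw [← ofReal_norm, Real.norm_eq_abs, abs_mul, abs_of_pos (jacobi_pos α β hxI)]
        apply ENNReal.ofReal_le_ofReal
        gcongr
        rw [hκ]; unfold jacobi
        have a1 : (1/2:ℝ)^α ≤ (1+x)^α := Real.rpow_le_rpow (by norm_num) (by linarith [hx.1]) hα
        have a2 : (1/2:ℝ)^β ≤ (1-x)^β := Real.rpow_le_rpow (by norm_num) (by linarith [hx.2]) hβ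
        have : 0 ≤ (1+x)^α := Real.rpow_nonneg (by linarith [hxI.1]) _
        gcongr
    _ ≤ _ := lintegral_mono_set (show Ioc (-(1/2):ℝ) (1/2) ⊆ Icc (-1:ℝ) 1 from fun x hx => ⟨by linarith [hx.1], by linarith [hx.2]⟩)


theorem statement6 (α β : ℝ) (hα : 0 ≤ α) (hβ : 0 ≤ β) (hne : ¬(α = 0 ∧ β = 0)) :
    ∃ c₁ > (0 : ℝ), ∃ c₂ > (0 : ℝ), ∀ n : ℕ, 1 ≤ n →
      ENNReal.ofReal (c₁ * (n : ℝ) ^ (-2 : ℝ)) ≤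
        EClass (MSet 2 ∩ BSet ∞ α β) n (jacobi α β) 1 ∧
      EClass (MSet 2 ∩ BSet ∞ α β) n (jacobi α β) 1 ≤
        ENNReal.ofReal (c₂ * (n : ℝ) ^ (-2 : ℝ) * Real.log ((n : ℝ) + 1)) := by
  obtain ⟨c₁, h1, H1⟩ := lower_bound α β hα hβ
  obtain ⟨c₂, h2, H2⟩ := upper_bound α β hα hβ
  exact ⟨c₁, h1, c₂, h2, fun n hn => ⟨H1 n hn, H2 n hn⟩⟩
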